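/- arXiv:1405.3597 — 9 statements merged into one kernel-verified Lean document; each statement's English description precedes it below -/
import Mathlib

section
/- Let R be an infinite commutative integral domain. A *-ary polynomial function F on R is barycentrically associative if and only if one of the following two conditions holds: (i) there exist z ∈ R and an integer k ≥ 1 or k = ∞, with k ≤ n(z), such that F ∈ [M^z]_k (i.e., F_n = M_n^z for every n < k and F_n is a constant function for every n ≥ k); or (ii) there exists a polynomial function Q : R² → R of degree ≥ 1 such that F_1(x) = x, F_2(x,y) = Q(x,y)·x + (1 − Q(x,y))·y, and F_n is a constant function for every n ≥ 3. -/
/-- Barycentric associativity of a `*`-ary function. -/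
def BAssoc {X : Type*} (F : ∀ n : ℕ, (Fin n → X) → X) : Prop :=
  ∀ (a b k : ℕ), 1 ≤ k → ∀ (x : Fin a → X) (y : Fin k → X) (z : Fin b → X),
    F (a + k + b) (Fin.append (Fin.append x y) z) =
      F (a + k + b) (Fin.append (Fin.append x (fun _ : Fin k => F k y)) z)

/-- `Δ_n^z = Σ_{i=1}^n z^{n-i} (1-z)^{i-1}` (here reindexed from `0` to `n-1`). -/
def Delta {R : Type*} [CommRing R] (n : ℕ) (z : R) : R :=
  ∑ i ∈ Finset.range n, z ^ (n - 1 - i) * (1 - z) ^ i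

/-- The weighted arithmetic mean `M_n^z`. (When `Δ_n^z` is not invertible,
`Ring.inverse` returns `0`, so this is the constant `0` function, in accordance with
the definition of the `*`-ary function `M^z`.) -/
noncomputable def Mz {R : Type*} [CommRing R] (n : ℕ) (z : R) (x : Fin n → R) : R :=
  Ring.inverse (Delta n z) * ∑ i : Fin n, z ^ (n - 1 - (i : ℕ)) * (1 - z) ^ (i : ℕ) * x i

/-- `n(z) = inf { n ≥ 1 : Δ_n^z is not invertible }`, an element of `ℕ∞ = ℕ ∪ {∞}`
(with `n(z) = ∞` when `Δ_n^z` is invertible for every `n ≥ 1`). -/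
noncomputable def nz {R : Type*} [CommRing R] (z : R) : ℕ∞ :=
  sInf {c : ℕ∞ | ∃ m : ℕ, c = (m : ℕ∞) ∧ 1 ≤ m ∧ ¬ IsUnit (Delta m z)}

open MvPolynomial

lemma totalDegree_le_iff_two {R : Type*} [CommRing R] (f : MvPolynomial (Fin 2) R) (n : ℕ) :
    f.totalDegree ≤ n ↔ ∀ s ∈ f.support, s 0 + s 1 ≤ n := by
  rw [totalDegree, Finset.sup_le_iff]
  simp [Finsupp.sum_fintype]

noncomputable def tld {R : Type*} [CommRing R] (f : MvPolynomial (Fin 2) R) : Polynomial (Polynomial R) :=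
  aeval ![Polynomial.X, Polynomial.C Polynomial.X * Polynomial.X] f

lemma wdeg_le {R : Type*} [CommRing R] [IsDomain R] (B : MvPolynomial (Fin 2) R)
    (p : Polynomial (Polynomial R)) (hφ : 1 ≤ p.leadingCoeff.natDegree)
    (s : Fin 2 →₀ ℕ) (hs : s ∈ B.support) :
    s 0 + p.natDegree * s 1 ≤ (aeval ![Polynomial.X, p] B).natDegree := by
  classical
  obtain ⟨s1, hs1, h1⟩ := Finset.exists_max_image B.support (fun s => s 0 + p.natDegree * s 1) ⟨s, hs⟩
  set M := s1 0 + p.natDegree * s1 1 with hM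
  obtain ⟨s2, hs2, h2⟩ := Finset.exists_max_image
    (B.support.filter (fun s => s 0 + p.natDegree * s 1 = M)) (fun s => s 1) ⟨s1, by simp [hM]; simpa using hs1⟩
  rw [Finset.mem_filter] at hs2
  refine (h1 s hs).trans ?_
  apply Polynomial.le_natDegree_of_ne_zero
  intro h0
  have key : ((aeval ![Polynomial.X, p] B).coeff M).coeff (s2 1 * p.leadingCoeff.natDegree)
      = B.coeff s2 * p.leadingCoeff.leadingCoeff ^ (s2 1) := by
    rw [aeval_def, eval₂_eq', Polynomial.finsetSum_coeff, Polynomial.finsetSum_coeff,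
      Finset.sum_eq_single s2]
    · have e : (p ^ (s2 1)).coeff (s2 1 * p.natDegree) = p.leadingCoeff ^ (s2 1) := by
        rw [← Polynomial.natDegree_pow, Polynomial.coeff_natDegree, Polynomial.leadingCoeff_pow]
      have e' : (p.leadingCoeff ^ (s2 1)).coeff (s2 1 * p.leadingCoeff.natDegree) =
          p.leadingCoeff.leadingCoeff ^ (s2 1) := by
        rw [← Polynomial.natDegree_pow, Polynomial.coeff_natDegree, Polynomial.leadingCoeff_pow]
      have : M = s2 1 * p.natDegree + s2 0 := by rw [← hs2.2]; ring
      simp only [Fin.prod_univ_two, Polynomial.algebraMap_apply, Algebra.algebraMap_self,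
        RingHom.id_apply, Polynomial.coeff_C_mul, Matrix.cons_val_zero, Matrix.cons_val_one]
      rw [mul_comm (Polynomial.X ^ _), this, Polynomial.coeff_mul_X_pow, e, e']
    · intro t ht hne
      simp only [Fin.prod_univ_two, Polynomial.algebraMap_apply, Algebra.algebraMap_self,
        RingHom.id_apply, Polynomial.coeff_C_mul, Matrix.cons_val_zero, Matrix.cons_val_one]
      rw [mul_comm (Polynomial.X ^ _)]
      rcases (h1 t ht).lt_or_eq with hlt | heq
      · have : (p ^ t 1 * Polynomial.X ^ t 0).natDegree < M := by
          refine lt_of_le_of_lt Polynomial.natDegree_mul_le ?_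
          rw [Polynomial.natDegree_pow, Polynomial.natDegree_X_pow]
          refine lt_of_eq_of_lt ?_ hlt
          ring
        rw [Polynomial.coeff_eq_zero_of_natDegree_lt this]; simp
      · have e : (p ^ (t 1)).coeff (t 1 * p.natDegree) = p.leadingCoeff ^ (t 1) := by
          rw [← Polynomial.natDegree_pow, Polynomial.coeff_natDegree, Polynomial.leadingCoeff_pow]
        have : M = t 1 * p.natDegree + t 0 := by rw [← heq]; ring
        rw [this, Polynomial.coeff_mul_X_pow, e]
        have hle := h2 t (by rw [Finset.mem_filter]; exact ⟨ht, heq⟩)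
        have hlt : t 1 < s2 1 := by
          rcases hle.lt_or_eq with h | h
          · exact h
          · exfalso; apply hne
            have := heq.trans hs2.2.symm
            simp only [h] at this
            ext i; fin_cases i
            · simpa using this
            · exact h
        rw [Polynomial.coeff_eq_zero_of_natDegree_lt, mul_zero]
        rw [Polynomial.natDegree_pow]
        exact Nat.mul_lt_mul_of_pos_right hlt hφ
    · intro h; exact absurd hs2.1 h
  rw [h0, Polynomial.coeff_zero] at key
  have hp : p.leadingCoeff ≠ 0 := by intro h; simp [h] at hφ
  exact mul_ne_zero (mem_support_iff.mp hs2.1) (pow_ne_zero _ (Polynomial.leadingCoeff_ne_zero.mpr hp)) key.symm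

lemma le_tld {R : Type*} [CommRing R] [IsDomain R] (f : MvPolynomial (Fin 2) R) :
    f.totalDegree ≤ (tld f).natDegree := by
  have hd : (Polynomial.C Polynomial.X * Polynomial.X : Polynomial (Polynomial R)).natDegree = 1 :=
    Polynomial.natDegree_C_mul_X _ Polynomial.X_ne_zero
  have hl : (Polynomial.C Polynomial.X * Polynomial.X : Polynomial (Polynomial R)).leadingCoeff = Polynomial.X := by
    simp
  rw [totalDegree_le_iff_two] 
  intro s hs
  have := wdeg_le f (Polynomial.C Polynomial.X * Polynomial.X) (by rw [hl]; simp) s hs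
  rw [hd, one_mul] at this
  rw [tld]
  exact this

lemma key1 {R : Type*} [CommRing R] [IsDomain R] [Infinite R] (f A B : MvPolynomial (Fin 2) R)
    (hf : ∀ t : R, eval ![t, t] f = t) (hdeg : 2 ≤ f.totalDegree)
    (hAB : ∀ x z : R, eval ![x, z] A = eval ![x, eval ![x, z] f] B)
    (s : Fin 2 →₀ ℕ) (hs : s ∈ B.support) : s 0 + 2 * s 1 ≤ A.totalDegree := by
  have h1 : A = bind₁ ![X 0, f] B := by
    apply MvPolynomial.funext
    intro x
    have hx : x = ![x 0, x 1] := by ext i; fin_cases i <;> rfl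
    rw [← coe_aeval_eq_eval, RingHom.coe_coe, aeval_bind₁, hx]
    have := hAB (x 0) (x 1)
    rw [← coe_aeval_eq_eval, RingHom.coe_coe] at this
    rw [this]
    rw [← coe_aeval_eq_eval, RingHom.coe_coe]
    congr 2
    ext i; fin_cases i <;> simp
  have h2 : tld A = aeval ![Polynomial.X, tld f] B := by
    conv_lhs => rw [h1, tld, aeval_bind₁]
    congr 2
    ext1 i; fin_cases i <;> simp [tld]
  have hD := hdeg.trans (le_tld f)
  have hne : (tld f).leadingCoeff ≠ 0 := by
    rw [Polynomial.leadingCoeff_ne_zero]; intro h; simp [h] at hD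
  have h3 : (tld f).map (Polynomial.evalRingHom 1) = Polynomial.X := by
    apply Polynomial.funext
    intro r
    rw [Polynomial.eval_X]
    conv_rhs => rw [← hf r]
    rw [tld, ← Polynomial.coe_evalRingHom, ← Polynomial.coe_mapRingHom]
    rw [aeval_def, hom_eval₂, hom_eval₂, eval, coe_eval₂Hom]
    congr 1
    · ext x; simp
    · ext i; fin_cases i <;> simp
  have h4 : (tld f).leadingCoeff.eval 1 = 0 := by
    have := congrArg (fun q => Polynomial.coeff q (tld f).natDegree) h3
    simp only [Polynomial.coeff_map] at this
    rw [Polynomial.coeff_X_of_ne_one (by omega)] at this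
    exact this
  have h5 : 1 ≤ (tld f).leadingCoeff.natDegree := by
    by_contra h
    have h : (tld f).leadingCoeff.natDegree = 0 := by omega
    rw [Polynomial.eq_C_of_natDegree_eq_zero h] at h4
    rw [Polynomial.eq_C_of_natDegree_eq_zero h] at hne
    simp at h4 
    simp [h4] at hne
  have h6 := wdeg_le B (tld f) h5 s hs
  rw [← h2] at h6
  have h7 : (tld A).natDegree ≤ A.totalDegree := by
    rw [tld, aeval_def, eval₂_eq']
    apply Polynomial.natDegree_sum_le_of_forall_le
    intro t ht
    have ht := (totalDegree_le_iff_two A _).mp le_rfl t ht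
    simp only [Fin.prod_univ_two, Polynomial.algebraMap_apply, Algebra.algebraMap_self,
        RingHom.id_apply, Matrix.cons_val_zero, Matrix.cons_val_one]
    refine (Polynomial.natDegree_C_mul_le _ _).trans (Polynomial.natDegree_mul_le.trans ?_)
    rw [Polynomial.natDegree_pow, Polynomial.natDegree_pow, Polynomial.natDegree_X,
      Polynomial.natDegree_C_mul_X _ Polynomial.X_ne_zero]
    omega
  have := Nat.mul_le_mul_right (s 1) hD
  omega

lemma eval_diag {R : Type*} [CommRing R] [IsDomain R] [Infinite R] (A : MvPolynomial (Fin 2) R)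
    (hA : ∀ t : R, eval ![t, t] A = t) : aeval ![Polynomial.X, Polynomial.X] A = (Polynomial.X : Polynomial R) := by
  apply Polynomial.funext
  intro r
  rw [Polynomial.eval_X]
  conv_rhs => rw [← hA r]
  rw [← Polynomial.coe_evalRingHom]
  rw [aeval_def, hom_eval₂, eval, coe_eval₂Hom]
  congr 1
  · ext x; simp
  · ext i; fin_cases i <;> simp

/-- weights 2,1 -/
lemma key2 {R : Type*} [CommRing R] [IsDomain R] [Infinite R] (A : MvPolynomial (Fin 2) R)
    (hA : ∀ t : R, eval ![t, t] A = t) (h : ∀ s ∈ A.support, 2 * s 0 + s 1 ≤ A.totalDegree) :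
    A.totalDegree = 1 := by
  classical
  have hA0 : A ≠ 0 := by rintro rfl; simpa using hA 1
  obtain ⟨s, hs, hM⟩ := Finset.exists_mem_eq_sup A.support (by simpa using hA0) (fun s => s.sum fun _ e => e)
  change A.totalDegree = _ at hM
  have hM' : A.totalDegree = s 0 + s 1 := by
    rw [hM]; simp [Finsupp.sum_fintype]
  have hs0 : s 0 = 0 := by have := h s hs; omega
  have hc : (aeval ![Polynomial.X, Polynomial.X] A : Polynomial R).coeff A.totalDegree = A.coeff s := by
    rw [aeval_def, eval₂_eq', Polynomial.finsetSum_coeff, Finset.sum_eq_single s]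
    · simp [Fin.prod_univ_two, hM', ← pow_add]
    · intro t ht hne
      simp only [Fin.prod_univ_two, Polynomial.algebraMap_apply, Algebra.algebraMap_self,
        RingHom.id_apply, Polynomial.coeff_C_mul, Matrix.cons_val_zero, Matrix.cons_val_one, ← pow_add,
        Polynomial.coeff_X_pow]
      rw [if_neg, mul_zero]
      intro he
      have := h t ht
      have h0 : t 0 = 0 := by omega
      apply hne
      ext i; fin_cases i
      · simp [hs0, h0]
      · simp; omega
    · intro h; exact absurd hs h
  rw [eval_diag A hA, Polynomial.coeff_X] at hc
  by_contra hne
  rw [if_neg (fun h => hne h.symm)] at hc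
  exact mem_support_iff.mp hs hc.symm

lemma key_sym {R : Type*} [CommRing R] (f : MvPolynomial (Fin 2) R) (x y : R) :
    eval ![x, y] (rename (Equiv.swap 0 1) f) = eval ![y, x] f := by
  rw [eval_rename]
  congr 2
  ext i; fin_cases i <;> simp

lemma swap_supp {R : Type*} [CommRing R] (f : MvPolynomial (Fin 2) R) (s : Fin 2 →₀ ℕ) (hs : s ∈ f.support) :
    ∃ t ∈ (rename (Equiv.swap (0 : Fin 2) 1) f).support, t 0 = s 1 ∧ t 1 = s 0 := by
  refine ⟨s.mapDomain (Equiv.swap (0 : Fin 2) 1), ?_, ?_, ?_⟩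
  · rw [mem_support_iff, coeff_rename_mapDomain _ (Equiv.injective _)]
    exact mem_support_iff.mp hs
  · have := Finsupp.mapDomain_apply (Equiv.injective (Equiv.swap (0 : Fin 2) 1)) s 1
    simpa using this
  · have := Finsupp.mapDomain_apply (Equiv.injective (Equiv.swap (0 : Fin 2) 1)) s 0
    simpa using this

lemma swap_deg {R : Type*} [CommRing R] (f : MvPolynomial (Fin 2) R) :
    (rename (Equiv.swap (0 : Fin 2) 1) f).totalDegree = f.totalDegree :=
  totalDegree_renameEquiv (Equiv.swap (0 : Fin 2) 1) f

lemma key3 {R : Type*} [CommRing R] [IsDomain R] [Infinite R] (f A B : MvPolynomial (Fin 2) R)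
    (hf : ∀ t : R, eval ![t, t] f = t) (hA : ∀ t : R, eval ![t, t] A = t)
    (hB : ∀ t : R, eval ![t, t] B = t)
    (hAB : ∀ x z : R, eval ![x, z] A = eval ![x, eval ![x, z] f] B)
    (hBA : ∀ x z : R, eval ![x, z] B = eval ![eval ![x, z] f, z] A) : f.totalDegree ≤ 1 := by
  by_contra hdeg
  have hdeg : 2 ≤ f.totalDegree := by omega
  have hBs := key1 f A B hf hdeg hAB
  have hAs : ∀ s ∈ A.support, 2 * s 0 + s 1 ≤ B.totalDegree := by
    intro s hs
    obtain ⟨t, ht, h0, h1⟩ := swap_supp A s hs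
    have := key1 (rename (Equiv.swap 0 1) f) (rename (Equiv.swap 0 1) B) (rename (Equiv.swap 0 1) A)
      (by intro t; rw [key_sym, hf]) (by rw [swap_deg]; exact hdeg)
      (by intro x z; rw [key_sym, key_sym, key_sym, hBA]) t ht
    rw [swap_deg] at this
    omega
  have e1 : A.totalDegree ≤ B.totalDegree := by
    rw [totalDegree_le_iff_two]
    intro s hs
    have := hAs s hs
    omega
  have e2 : B.totalDegree ≤ A.totalDegree := by
    rw [totalDegree_le_iff_two]
    intro s hs
    have := hBs s hs
    omega
  have e := le_antisymm e1 e2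
  have hM := key2 A hA (by rw [e]; exact hAs)
  have hA' : ∀ x z : R, eval ![x, z] A = z := by
    intro x z
    refine Eq.trans ?_ (hA z)
    rw [eval_eq', eval_eq']
    apply Finset.sum_congr rfl
    intro s hs
    have := hAs s hs
    have h0 : s 0 = 0 := by omega
    simp [Fin.prod_univ_two, h0]
  have hB' : ∀ x z : R, eval ![x, z] B = x := by
    intro x z
    refine Eq.trans ?_ (hB x)
    rw [eval_eq', eval_eq']
    apply Finset.sum_congr rfl
    intro s hs
    have := hBs s hs
    have h0 : s 1 = 0 := by omega
    simp [Fin.prod_univ_two, h0]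
  have := hAB 0 1
  rw [hA', hB'] at this
  exact one_ne_zero this

lemma block0 {X : Type*} {F : ∀ n : ℕ, (Fin n → X) → X} (h : BAssoc F) (a b k n : ℕ) (hk : 1 ≤ k)
    (hn : n = a + k + b) (v w : Fin n → X) (y : Fin k → X)
    (h1 : ∀ i : Fin n, ((i : ℕ) < a ∨ a + k ≤ (i : ℕ)) → w i = v i)
    (hy : ∀ j : Fin k, y j = v ⟨a + j, by omega⟩)
    (h2 : ∀ i : Fin n, a ≤ (i : ℕ) → (i : ℕ) < a + k → w i = F k y) : F n v = F n w := by
  subst hn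
  have := h a b k hk (fun i => v (Fin.castAdd b (Fin.castAdd k i))) y (fun i => v (Fin.natAdd (a + k) i))
  convert this using 2
  · ext i
    refine Fin.addCases (fun i => ?_) (fun i => ?_) i
    · rw [Fin.append_left]
      refine Fin.addCases (fun i => ?_) (fun i => ?_) i
      · rw [Fin.append_left]
      · rw [Fin.append_right, hy]
        rfl
    · rw [Fin.append_right]
  · ext i
    refine Fin.addCases (fun i => ?_) (fun i => ?_) i
    · rw [Fin.append_left]
      refine Fin.addCases (fun i => ?_) (fun i => ?_) i
      · rw [Fin.append_left]
        exact h1 _ (Or.inl (by simp))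
      · rw [Fin.append_right]
        exact h2 _ (by simp) (by simp)
    · rw [Fin.append_right]
      exact h1 _ (Or.inr (by simp))

lemma block1 {X : Type*} {F : ∀ n : ℕ, (Fin n → X) → X} (h : BAssoc F) (a b k n : ℕ) (hk : 1 ≤ k)
    (hn : n = a + k + b) (v w : Fin n → X)
    (h1 : ∀ i : Fin n, ((i : ℕ) < a ∨ a + k ≤ (i : ℕ)) → w i = v i)
    (hF : F k (fun j : Fin k => v ⟨a + j, by omega⟩) = F k (fun j : Fin k => w ⟨a + j, by omega⟩)) :
    F n v = F n w := by
  classical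
  let u : Fin n → X := fun i => if ((i : ℕ) < a ∨ a + k ≤ (i : ℕ)) then v i else
    F k (fun j : Fin k => v ⟨a + j, by omega⟩)
  have e1 : F n v = F n u := by
    apply block0 h a b k n hk hn v u _ _ (fun j => rfl)
    · intro i h h'
      exact if_neg (by omega)
    · intro i h
      exact if_pos h
  have e2 : F n w = F n u := by
    apply block0 h a b k n hk hn w u _ _ (fun j => rfl)
    · intro i h h'
      rw [← hF]
      exact if_neg (by omega)
    · intro i h
      rw [h1 i h]
      exact if_pos h
  rw [e1, e2]

lemma idem {X : Type*} {F : ∀ n : ℕ, (Fin n → X) → X} (h : BAssoc F) (n : ℕ) (hn : 1 ≤ n)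
    (v : Fin n → X) : F n (fun _ => F n v) = F n v := by
  symm
  apply block0 h 0 0 n n hn (by omega) v _ v
  · intro i hi; omega
  · intro j; congr 1; ext; simp
  · intros; rfl

lemma const_mono {X : Type*} [Inhabited X] {F : ∀ n : ℕ, (Fin n → X) → X} (h : BAssoc F) (m n : ℕ) (hm : 1 ≤ m)
    (hmn : m ≤ n) (hc : ∃ c, ∀ x, F m x = c) : ∃ c, ∀ x, F n x = c := by
  classical
  obtain ⟨c, hc⟩ := hc
  have step : ∀ (v : Fin n → X) (i : Fin n) (t : X), F n (Function.update v i t) = F n v := by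
    intro v i t
    obtain ⟨a, ha1, ha2, ha3⟩ : ∃ a, a ≤ (i : ℕ) ∧ (i : ℕ) < a + m ∧ a + m ≤ n := by
      by_cases hi : (i : ℕ) + m ≤ n
      · exact ⟨i, le_rfl, by omega, hi⟩
      · exact ⟨n - m, by omega, by omega, by omega⟩
    refine block1 h a (n - (a + m)) m n hm (by omega) _ _ ?_ ?_
    · intro j hj
      rw [Function.update_of_ne]
      rintro rfl
      omega
    · rw [hc, hc]
  refine ⟨F n (fun _ => default), fun x => ?_⟩
  have : ∀ s : Finset (Fin n), F n (fun i => if i ∈ s then x i else default) = F n (fun _ => default) := by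
    intro s
    induction s using Finset.induction_on with
    | empty => simp
    | insert a s ha ih =>
      rw [← ih, ← step (fun i => if i ∈ s then x i else default) a (x a)]
      congr 1
      ext i
      by_cases hi : i = a
      · subst hi; simp
      · simp [hi]
  simpa using this Finset.univ

lemma poly_idem {R : Type*} [CommRing R] [IsDomain R] [Infinite R] {n : ℕ} (p : MvPolynomial (Fin n) R)
    (hid : ∀ v : Fin n → R, eval (fun _ => eval v p) p = eval v p)
    (hnc : ¬ ∃ c, ∀ v : Fin n → R, eval v p = c) (t : R) : eval (fun _ => t) p = t := by
  classical
  let q : Polynomial R := aeval (fun _ => Polynomial.X) p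
  have hq : ∀ t, q.eval t = eval (fun _ => t) p := by
    intro t
    rw [← Polynomial.coe_evalRingHom]
    simp only [q]
    rw [aeval_def, hom_eval₂, eval, coe_eval₂Hom]
    congr 1
    · ext x; simp
    · ext i; simp
  by_cases he : q - Polynomial.X = 0
  · rw [← hq, sub_eq_zero.mp he]; simp
  · exfalso
    have h1 : ∏ r ∈ (q - Polynomial.X).roots.toFinset, (p - C r) = 0 := by
      apply MvPolynomial.funext
      intro v
      rw [map_zero, map_prod]
      apply Finset.prod_eq_zero (i := eval v p)
      · rw [Multiset.mem_toFinset, Polynomial.mem_roots he]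
        simp [hq, hid]
      · simp
    rw [Finset.prod_eq_zero_iff] at h1
    obtain ⟨r, -, hr⟩ := h1
    exact hnc ⟨r, fun v => by rw [sub_eq_zero.mp hr]; simp⟩

lemma linear_of_inv {R : Type*} [CommRing R] [IsDomain R] [Infinite R] (m : ℕ) (z : R)
    (G : (Fin (m + 1) → R) → R) (p : MvPolynomial (Fin (m + 1)) R) (hp : ∀ v, G v = eval v p)
    (hid : ∀ t, G (fun _ => t) = t)
    (hinv : ∀ (v : Fin (m + 1) → R) (i : Fin m) (s : R),
      G (v + s • ((1 - z) • Pi.single i.castSucc 1 - z • Pi.single i.succ 1)) = G v) :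
    IsUnit (Delta (m + 1) z) ∧ G = Mz (m + 1) z := by
  classical
  let S : Submodule R (Fin (m + 1) → R) :=
    { carrier := {d | ∀ (s : R) v, G (v + s • d) = G v}
      zero_mem' := by intro s v; simp
      add_mem' := by
        intro a b ha hb s v
        rw [smul_add, ← add_assoc, hb, ha]
      smul_mem' := by
        intro c x hx s v
        rw [smul_smul, hx] }
  let E : ℕ → (Fin (m + 1) → R) := fun j => if h : j < m + 1 then Pi.single ⟨j, h⟩ 1 else 0
  let ε : ℕ → (Fin (m + 1) → R) ⧸ S := fun j => S.mkQ (E j)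
  have r1 : ∀ j < m, z • ε (j + 1) = (1 - z) • ε j := by
    intro j hj
    have : (1 - z) • E j - z • E (j + 1) ∈ S := by
      intro s v
      have := hinv v ⟨j, hj⟩ s
      simp only [E]
      rw [dif_pos (by omega), dif_pos (by omega)]
      exact this
    simp only [ε]
    rw [← map_smul, ← map_smul]
    symm
    rw [← sub_eq_zero, ← map_sub]
    rw [← LinearMap.mem_ker, Submodule.ker_mkQ]
    exact this
  have r2 : ∀ k j, j + k ≤ m → z ^ k • ε (j + k) = (1 - z) ^ k • ε j := by
    intro k
    induction k with
    | zero => intro j _; simp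
    | succ k ih =>
      intro j hj
      rw [pow_succ, mul_smul, ← add_assoc, r1 _ (by omega), smul_comm, ih j (by omega), smul_smul, pow_succ']
  have r3 : ∀ i j, i ≤ j → j ≤ m →
      (z ^ (m - i) * (1 - z) ^ i) • ε j = (z ^ (m - j) * (1 - z) ^ j) • ε i := by
    intro i j hij hj
    have := r2 (j - i) i (by omega)
    rw [show i + (j - i) = j by omega] at this
    rw [show m - i = (m - j) + (j - i) by omega, pow_add]
    calc _ = (z ^ (m - j) * (1 - z) ^ i) • (z ^ (j - i) • ε j) := by rw [smul_smul]; congr 1; ring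
      _ = _ := by
        rw [this, smul_smul, mul_assoc, ← pow_add, show i + (j - i) = j by omega]
  have r4 : ∀ i j, i ≤ m → j ≤ m →
      (z ^ (m - i) * (1 - z) ^ i) • ε j = (z ^ (m - j) * (1 - z) ^ j) • ε i := by
    intro i j hi hj
    rcases le_total i j with h | h
    · exact r3 i j h hj
    · exact (r3 j i h hi).symm
  let u : Fin (m + 1) → R := ∑ j ∈ Finset.range (m + 1), (m.choose j : R) • E j
  have r5 : ∀ i ≤ m, (z ^ (m - i) * (1 - z) ^ i) • S.mkQ u = ε i := by
    intro i hi
    have h1 : S.mkQ u = ∑ j ∈ Finset.range (m + 1), (m.choose j : R) • ε j := by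
      simp only [u, map_sum, map_smul, ε]
    rw [h1, Finset.smul_sum]
    have h2 : ∀ j ∈ Finset.range (m + 1), (z ^ (m - i) * (1 - z) ^ i) • (m.choose j : R) • ε j =
        ((1 - z) ^ j * z ^ (m - j) * (m.choose j : R)) • ε i := by
      intro j hj
      rw [smul_comm, r4 i j hi (by simpa [Nat.lt_succ_iff] using hj), smul_smul]
      congr 1; ring
    rw [Finset.sum_congr rfl h2, ← Finset.sum_smul, ← add_pow]
    simp
  let W : (Fin (m + 1) → R) → R := fun y => ∑ i : Fin (m + 1), z ^ (m - (i : ℕ)) * (1 - z) ^ (i : ℕ) * y i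
  have r6 : ∀ y, G y = G (W y • u) := by
    intro y
    have h1 : y - W y • u ∈ S := by
      rw [← Submodule.ker_mkQ S, LinearMap.mem_ker, map_sub, map_smul, sub_eq_zero]
      have : y = ∑ i : Fin (m + 1), y i • E i := by
        have hE : ∀ i : Fin (m + 1), E i = Pi.single i 1 := fun i => dif_pos i.2
        ext j
        simp [hE, Finset.sum_apply, Pi.single_apply]
      conv_lhs => rw [this]
      simp only [map_sum, map_smul, W, Finset.sum_smul]
      apply Finset.sum_congr rfl
      intro i _
      rw [mul_comm, mul_smul, r5 i (by omega)]
    have := h1 1 (W y • u)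
    rw [← this]; congr 1; simp
  let h : Polynomial R := aeval (fun i => Polynomial.C (u i) * Polynomial.X) p
  have hh : ∀ s, h.eval s = G (s • u) := by
    intro s
    rw [hp, ← Polynomial.coe_evalRingHom]
    simp only [h]
    rw [aeval_def, hom_eval₂, eval, coe_eval₂Hom]
    congr 1
    · ext x; simp
    · ext i; simp; ring
  have hW : ∀ t, W (fun _ => t) = Delta (m + 1) z * t := by
    intro t
    simp only [W, Delta]
    rw [← Finset.sum_mul, Finset.sum_range]
    simp
  have hc : h.comp (Polynomial.C (Delta (m + 1) z) * Polynomial.X) = Polynomial.X := by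
    apply Polynomial.funext
    intro t
    rw [Polynomial.eval_comp]
    simp only [Polynomial.eval_mul, Polynomial.eval_C, Polynomial.eval_X]
    rw [hh, ← hW, ← r6, hid]
  have hco : ∀ n, h.coeff n * Delta (m + 1) z ^ n = (Polynomial.X : Polynomial R).coeff n := by
    intro n
    rw [← hc, Polynomial.comp_C_mul_X_coeff]
  have h1 : h.coeff 1 * Delta (m + 1) z = 1 := by simpa using hco 1
  have hu : IsUnit (Delta (m + 1) z) := IsUnit.of_mul_eq_one_right _ h1
  refine ⟨hu, ?_⟩
  have h2 : h = Polynomial.C (h.coeff 1) * Polynomial.X := by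
    ext n
    by_cases hn : n = 1
    · subst hn; simp
    · have := hco n
      rw [Polynomial.coeff_X_of_ne_one hn] at this
      rw [Polynomial.coeff_C_mul, Polynomial.coeff_X_of_ne_one hn, mul_zero]
      exact (mul_eq_zero.mp this).resolve_right (pow_ne_zero _ hu.ne_zero)
  have h3 : Ring.inverse (Delta (m + 1) z) = h.coeff 1 := by
    have := Ring.mul_inverse_cancel _ hu
    calc _ = (h.coeff 1 * Delta (m + 1) z) * Ring.inverse (Delta (m + 1) z) := by rw [h1, one_mul]
      _ = _ := by rw [mul_assoc, this, mul_one]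
  ext y
  rw [r6, ← hh, h2, Mz, h3]
  simp [W]

lemma Mz_two {R : Type*} [CommRing R] (z : R) (x : Fin 2 → R) : Mz 2 z x = z * x 0 + (1 - z) * x 1 := by
  simp [Mz, Delta, Finset.sum_range_succ]

lemma step_n {R : Type*} [CommRing R] [IsDomain R] [Infinite R]
    (F : ∀ n : ℕ, (Fin n → R) → R)
    (hpoly : ∀ n : ℕ, 1 ≤ n →
      ∃ p : MvPolynomial (Fin n) R, ∀ x : Fin n → R, F n x = MvPolynomial.eval x p)
    (h : BAssoc F) (z : R) (n : ℕ) (hn : 1 ≤ n) (h2 : 2 ≤ n → ∀ x, F 2 x = z * x 0 + (1 - z) * x 1)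
    (hnc : ¬ ∃ c, ∀ x, F n x = c) : IsUnit (Delta n z) ∧ F n = Mz n z := by
  obtain ⟨p, hp⟩ := hpoly n hn
  have hid : ∀ t, F n (fun _ => t) = t := by
    intro t
    rw [hp]
    apply poly_idem
    · intro v
      rw [← hp, ← hp, idem h n hn]
    · simpa only [hp] using hnc
  obtain ⟨m, rfl⟩ : ∃ m, n = m + 1 := ⟨n - 1, by omega⟩
  refine linear_of_inv m z (F (m + 1)) p hp hid ?_
  intro v i s
  have hi := i.2
  refine block1 h i (m - 1 - i) 2 (m + 1) (by omega) (by omega) _ _ ?_ ?_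
  · intro j hj
    have a1 : j ≠ i.castSucc := by rintro rfl; simp at hj
    have a2 : j ≠ i.succ := by rintro rfl; simp at hj
    simp [a1, a2]
  · rw [h2 (by omega), h2 (by omega)]
    have b1 : (⟨(i : ℕ) + ((0 : Fin 2) : ℕ), by simp⟩ : Fin (m + 1)) = i.castSucc := by ext; simp
    have b2 : (⟨(i : ℕ) + ((1 : Fin 2) : ℕ), by simp⟩ : Fin (m + 1)) = i.succ := by ext; simp
    rw [b1, b2]
    have c : i.succ ≠ i.castSucc := by intro h; simp [Fin.ext_iff] at h
    simp [c, c.symm]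
    ring

lemma final {R : Type*} [CommRing R] (F : ∀ n : ℕ, (Fin n → R) → R) (h : BAssoc F) (z : R)
    (hz : ∀ n, 1 ≤ n → (¬ ∃ c, ∀ x, F n x = c) → IsUnit (Delta n z) ∧ F n = Mz n z) :
    ∃ z : R, ∃ k : ℕ∞, 1 ≤ k ∧ k ≤ nz z ∧
          (∀ n : ℕ, 1 ≤ n → (n : ℕ∞) < k → F n = Mz n z) ∧
          (∀ n : ℕ, 1 ≤ n → k ≤ (n : ℕ∞) → ∃ c : R, ∀ x : Fin n → R, F n x = c) := by
  have hlt : ∀ n : ℕ, 1 ≤ n →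
      (n : ℕ∞) < sInf {c : ℕ∞ | ∃ m : ℕ, c = (m : ℕ∞) ∧ 1 ≤ m ∧ ∃ c, ∀ x, F m x = c} →
      IsUnit (Delta n z) ∧ F n = Mz n z := by
    intro n hn hlt
    apply hz n hn
    intro hc
    exact absurd hlt (not_lt.mpr (sInf_le ⟨n, rfl, hn, hc⟩))
  refine ⟨z, sInf {c : ℕ∞ | ∃ m : ℕ, c = (m : ℕ∞) ∧ 1 ≤ m ∧ ∃ c, ∀ x, F m x = c}, ?_, ?_, ?_, ?_⟩
  · apply le_sInf
    rintro _ ⟨m, rfl, hm, -⟩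
    exact_mod_cast hm
  · apply le_sInf
    rintro _ ⟨m, rfl, hm, hu⟩
    by_contra hlt'
    exact hu (hlt m hm (not_le.mp hlt')).1
  · intro n hn hlt'
    exact (hlt n hn hlt').2
  · intro n hn hle
    by_contra hcon
    have : ((n + 1 : ℕ) : ℕ∞) ≤ n := by
      refine le_trans (le_sInf ?_) hle
      rintro _ ⟨m, rfl, hm, hc⟩
      rw [Nat.cast_le]
      by_contra hmn
      have : Inhabited R := ⟨0⟩
      exact hcon (const_mono h m n hm (by omega) hc)
    rw [Nat.cast_le] at this
    omega

lemma exQ {R : Type*} [CommRing R] [IsDomain R] [Infinite R] (p : MvPolynomial (Fin 2) R)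
    (hid : ∀ t : R, eval (fun _ => t) p = t) : ∃ Q : MvPolynomial (Fin 2) R,
      p = X 1 + (X 0 - X 1) * Q := by
  have h1 : (aeval (fun _ => X 1) p : MvPolynomial (Fin 2) R) = X 1 := by
    apply MvPolynomial.funext
    intro x
    rw [eval_X, ← coe_aeval_eq_eval, RingHom.coe_coe]
    refine Eq.trans ?_ (hid (x 1))
    rw [← AlgHom.comp_apply, comp_aeval]
    rw [← coe_aeval_eq_eval, RingHom.coe_coe]
    simp only [aeval_X]
  have h2 : p - X 1 ∈ Ideal.span {(X 0 - X 1 : MvPolynomial (Fin 2) R)} := by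
    suffices hs : p - aeval (fun _ => X 1) p ∈ Ideal.span {(X 0 - X 1 : MvPolynomial (Fin 2) R)} by
      rwa [h1] at hs
    rw [← Ideal.Quotient.eq]
    set I := Ideal.span {(X 0 - X 1 : MvPolynomial (Fin 2) R)} with hI
    have hx : Ideal.Quotient.mk I (X 0) = Ideal.Quotient.mk I (X 1) := by
      rw [Ideal.Quotient.eq]; exact Ideal.subset_span rfl
    have : (Ideal.Quotient.mkₐ R I) = (Ideal.Quotient.mkₐ R I).comp (aeval (fun _ => X 1)) := by
      apply MvPolynomial.algHom_ext
      intro i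
      fin_cases i
      · simpa using hx
      · simp
    exact DFunLike.congr_fun this p
  rw [Ideal.mem_span_singleton] at h2
  obtain ⟨Q, hQ⟩ := h2
  exact ⟨Q, by rw [← hQ]; ring⟩

lemma deg_Q {R : Type*} [CommRing R] [IsDomain R] (Q : MvPolynomial (Fin 2) R)
    (h : (X 1 + (X 0 - X 1) * Q).totalDegree ≤ 1) : Q.totalDegree = 0 := by
  by_cases hQ : Q = 0
  · simp [hQ]
  have hne : (X 0 - X 1 : MvPolynomial (Fin 2) R) ≠ 0 := by
    rw [sub_ne_zero]
    intro h
    have := X_injective h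
    simp at this
  have h1 : 1 ≤ (X 0 - X 1 : MvPolynomial (Fin 2) R).totalDegree := by
    by_contra hlt
    have h0 : (X 0 - X 1 : MvPolynomial (Fin 2) R).totalDegree = 0 := by omega
    rw [totalDegree_eq_zero_iff_eq_C] at h0
    have e0 := congrArg (eval ![1, 0]) h0
    have e1 := congrArg (eval ![0, 0]) h0
    simp only [eval_C, map_sub, eval_X] at e0 e1
    rw [← e1] at e0
    simp at e0
  have h2 := totalDegree_mul_of_isDomain hne hQ
  have h3 : ((X 0 - X 1) * Q).totalDegree ≤ 1 := by
    have : (X 0 - X 1) * Q = (X 1 + (X 0 - X 1) * Q) - X 1 := by ring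
    rw [this]
    refine (totalDegree_sub _ _).trans (max_le h ?_)
    rw [totalDegree_X]
  omega

lemma f3 {R : Type*} [CommRing R] [IsDomain R] [Infinite R]
    (F : ∀ n : ℕ, (Fin n → R) → R) (h : BAssoc F)
    (f : MvPolynomial (Fin 2) R) (hf : ∀ x, F 2 x = eval x f)
    (g : MvPolynomial (Fin 3) R) (hg : ∀ x, F 3 x = eval x g)
    (hfi : ∀ t, F 2 (fun _ => t) = t) (hgi : ∀ t, F 3 (fun _ => t) = t) : f.totalDegree ≤ 1 := by
  have c2 : ∀ t : R, ![t, t] = fun _ => t := by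
    intro t; ext i; fin_cases i <;> rfl
  have c3 : ∀ t : R, ![t, t, t] = fun _ => t := by
    intro t; ext i; fin_cases i <;> rfl
  let A : MvPolynomial (Fin 2) R := bind₁ ![X 0, X 0, X 1] g
  let B : MvPolynomial (Fin 2) R := bind₁ ![X 0, X 1, X 1] g
  have hA : ∀ x z, eval ![x, z] A = F 3 ![x, x, z] := by
    intro x z
    rw [hg, ← coe_aeval_eq_eval, RingHom.coe_coe, aeval_bind₁, ← coe_aeval_eq_eval, RingHom.coe_coe]
    congr 2
    ext i; fin_cases i <;> simp
  have hB : ∀ x z, eval ![x, z] B = F 3 ![x, z, z] := by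
    intro x z
    rw [hg, ← coe_aeval_eq_eval, RingHom.coe_coe, aeval_bind₁, ← coe_aeval_eq_eval, RingHom.coe_coe]
    congr 2
    ext i; fin_cases i <;> simp
  refine key3 f A B ?_ ?_ ?_ ?_ ?_
  · intro t; rw [c2, ← hf, hfi]
  · intro t; rw [hA, c3, hgi]
  · intro t; rw [hB, c3, hgi]
  · intro x z
    rw [hA, hB, ← hf]
    apply block0 h 1 0 2 3 (by omega) (by omega) _ _ ![x, z]
    · intro i hi; fin_cases i <;> simp at hi ⊢
    · intro j; fin_cases j <;> rfl
    · intro i hi hi'; fin_cases i <;> simp at hi hi' ⊢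
  · intro x z
    rw [hA, hB, ← hf]
    apply block0 h 0 1 2 3 (by omega) (by omega) _ _ ![x, z]
    · intro i hi; fin_cases i <;> simp at hi ⊢
    · intro j; fin_cases j <;> rfl
    · intro i hi hi'; fin_cases i <;> simp at hi hi' ⊢

lemma Mz_assoc {R : Type*} [CommRing R] (z : R) (a b k : ℕ) (hu : IsUnit (Delta k z))
    (x : Fin a → R) (y : Fin k → R) (w : Fin b → R) :
    Mz (a + k + b) z (Fin.append (Fin.append x y) w) =
      Mz (a + k + b) z (Fin.append (Fin.append x (fun _ : Fin k => Mz k z y)) w) := by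
  unfold Mz
  congr 1
  simp only [Fin.sum_univ_add, Fin.append_left, Fin.append_right]
  congr 2
  have e : ∀ q : Fin k → R, ∑ i : Fin k, z ^ (a + k + b - 1 - ((Fin.castAdd b (Fin.natAdd a i) : Fin (a + k + b)) : ℕ)) *
      (1 - z) ^ ((Fin.castAdd b (Fin.natAdd a i) : Fin (a + k + b)) : ℕ) * q i =
      z ^ b * (1 - z) ^ a * ∑ i : Fin k, z ^ (k - 1 - (i : ℕ)) * (1 - z) ^ (i : ℕ) * q i := by
    intro q
    rw [Finset.mul_sum]
    apply Finset.sum_congr rfl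
    intro i _
    have : a + k + b - 1 - ((Fin.castAdd b (Fin.natAdd a i) : Fin (a + k + b)) : ℕ) = b + (k - 1 - (i : ℕ)) := by
      simp; omega
    rw [this]
    simp only [Fin.val_castAdd, Fin.val_natAdd, pow_add]
    ring
  rw [e y, e (fun _ => _)]
  congr 1
  rw [← Finset.sum_mul, ← Finset.sum_range (fun i => z ^ (k - 1 - i) * (1 - z) ^ i)]
  change _ = Delta k z * _
  rw [← mul_assoc, Ring.mul_inverse_cancel _ hu, one_mul]

/-- Main Theorem: a `*`-ary polynomial function `F` over an infinite commutative integral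
domain `R` is B-associative if and only if (i) there are `z ∈ R` and `k` (an integer
`k ≥ 1` or `k = ∞`) with `k ≤ n(z)` such that `F ∈ [M^z]_k`, i.e. `F_n = M_n^z` for
every `n < k` and `F_n` is constant for every `n ≥ k`; or (ii) there is a polynomial
function `Q : R² → R` of degree `≥ 1` such that `F_1(x) = x`,
`F_2(x,y) = Q(x,y)·x + (1 - Q(x,y))·y`, and `F_n` is constant for every `n ≥ 3`. -/
theorem bassoc_polynomial_characterization
    {R : Type*} [CommRing R] [IsDomain R] [Infinite R]
    (F : ∀ n : ℕ, (Fin n → R) → R)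
    (hpoly : ∀ n : ℕ, 1 ≤ n →
      ∃ p : MvPolynomial (Fin n) R, ∀ x : Fin n → R, F n x = MvPolynomial.eval x p) :
    BAssoc F ↔
      ((∃ z : R, ∃ k : ℕ∞, 1 ≤ k ∧ k ≤ nz z ∧
          (∀ n : ℕ, 1 ≤ n → (n : ℕ∞) < k → F n = Mz n z) ∧
          (∀ n : ℕ, 1 ≤ n → k ≤ (n : ℕ∞) → ∃ c : R, ∀ x : Fin n → R, F n x = c)) ∨
        (∃ Q : MvPolynomial (Fin 2) R, 1 ≤ Q.totalDegree ∧
          (∀ x : Fin 1 → R, F 1 x = x 0) ∧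
          (∀ x : Fin 2 → R, F 2 x =
            MvPolynomial.eval x Q * x 0 + (1 - MvPolynomial.eval x Q) * x 1) ∧
          (∀ n : ℕ, 3 ≤ n → ∃ c : R, ∀ x : Fin n → R, F n x = c))) := by
  constructor
  · intro h
    have : Inhabited R := ⟨0⟩
    have hid : ∀ n, 1 ≤ n → (¬ ∃ c, ∀ x, F n x = c) → ∀ t, F n (fun _ => t) = t := by
      intro n hn hnc t
      obtain ⟨p, hp⟩ := hpoly n hn
      rw [hp]
      apply poly_idem
      · intro v
        rw [← hp, ← hp, idem h n hn]
      · simpa only [hp] using hnc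
    by_cases h2 : ∃ c, ∀ x, F 2 x = c
    · left
      refine final F h 0 (fun n hn hnc => step_n F hpoly h 0 n hn ?_ hnc)
      intro hn2
      exact absurd (const_mono h 2 n (by omega) hn2 h2) hnc
    obtain ⟨f, hf⟩ := hpoly 2 (by omega)
    obtain ⟨Q, hQ⟩ := exQ f (fun t => by rw [← hf]; exact hid 2 (by omega) h2 t)
    have hF2 : ∀ x : Fin 2 → R, F 2 x =
            MvPolynomial.eval x Q * x 0 + (1 - MvPolynomial.eval x Q) * x 1 := by
      intro x
      rw [hf, hQ]
      simp
      ring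
    by_cases hd : Q.totalDegree = 0
    · left
      rw [MvPolynomial.totalDegree_eq_zero_iff_eq_C] at hd
      refine final F h (Q.coeff 0) (fun n hn hnc => step_n F hpoly h _ n hn ?_ hnc)
      intro _ x
      rw [hF2, hd]
      simp
    · right
      refine ⟨Q, by omega, ?_, hF2, ?_⟩
      · intro x
        have h1 : ¬ ∃ c, ∀ x, F 1 x = c := fun hc => h2 (const_mono h 1 2 (by omega) (by omega) hc)
        refine Eq.trans ?_ (hid 1 (by omega) h1 (x 0))
        congr 1
        ext i
        rw [Subsingleton.elim i 0]
      · intro n hn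
        by_cases h3 : ∃ c, ∀ x, F 3 x = c
        · exact const_mono h 3 n (by omega) hn h3
        · exfalso
          obtain ⟨g, hg⟩ := hpoly 3 (by omega)
          have := f3 F h f hf g hg (hid 2 (by omega) h2) (hid 3 (by omega) h3)
          rw [hQ] at this
          exact hd (deg_Q Q this)
  · rintro (⟨z, k0, -, hk0, hM, hC⟩ | ⟨Q, -, h1, h2, h3⟩)
    · intro a b k hk x y w
      by_cases hlt : ((a + k + b : ℕ) : ℕ∞) < k0
      · have hkl : (k : ℕ∞) < k0 := lt_of_le_of_lt (by rw [Nat.cast_le]; omega) hlt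
        rw [hM _ (by omega) hlt, hM k hk hkl]
        apply Mz_assoc z a b k
        by_contra hu
        have : nz z ≤ k := sInf_le ⟨k, rfl, hk, hu⟩
        exact absurd (hkl.trans_le hk0) (not_lt.mpr this)
      · obtain ⟨c, hc⟩ := hC (a + k + b) (by omega) (not_lt.mp hlt)
        rw [hc, hc]
    · intro a b k hk x y w
      by_cases hge : 3 ≤ a + k + b
      · obtain ⟨c, hc⟩ := h3 (a + k + b) hge
        rw [hc, hc]
      · by_cases hk1 : k = 1
        · subst hk1
          congr 3
          ext i
          rw [h1, Subsingleton.elim i 0]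
        · obtain ⟨rfl, rfl, rfl⟩ : a = 0 ∧ b = 0 ∧ k = 2 := by omega
          rw [show (Fin.append (Fin.append x (fun _ : Fin 2 => F 2 y)) w) = fun _ => F 2 y by
            ext i
            refine Fin.addCases (fun i => ?_) (fun i => i.elim0) i
            rw [Fin.append_left]
            refine Fin.addCases (fun i => i.elim0) (fun i => ?_) i
            rw [Fin.append_right]]
          have e : Fin.append (Fin.append x y) w = y := by
            ext i
            fin_cases i <;> rfl
          have g := h2 (fun _ => F 2 y)
          refine (congrArg (F 2) e).trans (Eq.trans ?_ g.symm)
          ring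
end

section
/- Let F be a barycentrically associative *-ary function on a nonempty set X. If the n-ary part F_n is a constant function for some n ≥ 1, then F_{n+1} is also a constant function. -/
theorem bassoc_aux {X : Type*} (F : ∀ n : ℕ, (Fin n → X) → X) (hF : BAssoc F)
    (a b k m : ℕ) (hk : 1 ≤ k) (h : m = a + k + b) (w : Fin m → X) (c : X)
    (hc : ∀ y : Fin k → X, F k y = c) :
    F m w = F m (fun i => if a ≤ i.val ∧ i.val < a + k then c else w i) := by
  subst h
  have := hF a b k hk (fun i => w (Fin.castAdd b (Fin.castAdd k i)))
    (fun i => w (Fin.castAdd b (Fin.natAdd a i))) (fun i => w (Fin.natAdd (a + k) i))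
  rw [hc] at this
  convert this using 2
  · funext i
    refine Fin.addCases (fun i => ?_) (fun i => ?_) i
    · refine Fin.addCases (fun i => ?_) (fun i => ?_) i <;> simp
    · simp
  · funext i
    refine Fin.addCases (fun i => ?_) (fun i => ?_) i
    · refine Fin.addCases (fun i => ?_) (fun i => ?_) i <;> simp
    · simp

/-- Fact 1 (i): if `F` is B-associative and `F_n` is constant for some `n ≥ 1`,
then `F_{n+1}` is also constant. -/
theorem bassoc_constant_succ {X : Type*} [Nonempty X]
    (F : ∀ n : ℕ, (Fin n → X) → X) (hF : BAssoc F)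
    (n : ℕ) (hn : 1 ≤ n) (c : X) (hc : ∀ x : Fin n → X, F n x = c) :
    ∃ c' : X, ∀ x : Fin (n + 1) → X, F (n + 1) x = c' := by
  refine ⟨F (n + 1) (fun _ => c), fun x => ?_⟩
  rw [bassoc_aux F hF 1 0 n (n + 1) hn (by omega) x c hc,
    bassoc_aux F hF 0 1 n (n + 1) hn (by omega) _ c hc]
  congr 1
  funext i
  have := i.isLt
  split_ifs <;> first | rfl | (exfalso; omega)
end

section
/- Let R be an infinite commutative integral domain and let F : R^n → R be a polynomial function. Then F is range-idempotent (i.e., F(n·x) = x for every x in the range of F) if and only if F is either a constant function or idempotent (i.e., F(n·x) = x for every x ∈ R). -/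
/-- Lemma: over an infinite commutative integral domain `R`, a polynomial function
`F : R^n → R` is range-idempotent (i.e. `F (n·x) = x` for every `x` in the range of `F`)
if and only if it is either constant or idempotent (i.e. `F (n·x) = x` for every `x ∈ R`). -/
theorem rangeIdempotent_iff_constant_or_idempotent
    {R : Type*} [CommRing R] [IsDomain R] [Infinite R] {n : ℕ}
    (F : (Fin n → R) → R)
    (hF : ∃ p : MvPolynomial (Fin n) R, ∀ x : Fin n → R, F x = MvPolynomial.eval x p) :
    (∀ x ∈ Set.range F, F (fun _ : Fin n => x) = x) ↔
      ((∃ c : R, ∀ x : Fin n → R, F x = c) ∨ (∀ x : R, F (fun _ : Fin n => x) = x)) := by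
  classical
  obtain ⟨p, hp⟩ := hF
  constructor
  · intro h
    let q : Polynomial R := MvPolynomial.aeval (fun _ : Fin n => (Polynomial.X : Polynomial R)) p
    have hq : ∀ x : R, q.eval x = F (fun _ : Fin n => x) := by
      intro x
      rw [hp]
      have h1 : ((Polynomial.aeval x).comp
          (MvPolynomial.aeval (fun _ : Fin n => (Polynomial.X : Polynomial R)))) =
          (MvPolynomial.aeval (fun _ : Fin n => x) : MvPolynomial (Fin n) R →ₐ[R] R) := by
        ext i
        simp
      have h2 := DFunLike.congr_fun h1 p
      simpa [q, Polynomial.aeval_def, MvPolynomial.aeval_eq_eval] using h2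
    by_cases hr : q - Polynomial.X = 0
    · right
      intro x
      rw [← hq, sub_eq_zero.mp hr, Polynomial.eval_X]
    · left
      have hz : ∏ a ∈ (q - Polynomial.X).roots.toFinset, (p - MvPolynomial.C a) = 0 := by
        apply MvPolynomial.funext
        intro y
        rw [map_prod, map_zero]
        apply Finset.prod_eq_zero (i := F y)
        · rw [Multiset.mem_toFinset, Polynomial.mem_roots hr, Polynomial.IsRoot.def,
            Polynomial.eval_sub, Polynomial.eval_X, hq, h _ ⟨y, rfl⟩, sub_self]
        · simp [hp]
      obtain ⟨a, -, ha⟩ := Finset.prod_eq_zero_iff.mp hz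
      refine ⟨a, fun x => ?_⟩
      rw [hp, sub_eq_zero.mp ha, MvPolynomial.eval_C]
  · rintro (⟨c, hc⟩ | h)
    · rintro _ ⟨y, rfl⟩
      rw [hc, hc]
    · intro x _
      exact h x
end

section
/- Let F be a barycentrically associative *-ary polynomial function on an infinite field R and assume that F_{n+1} is nonconstant for some integer n ≥ 2. Then there exists an idempotent binary polynomial function P : R² → R such that for all x_1,…,x_{n+1} ∈ R: (1) F_{n+1}(x_1,…,x_{n+1}) = P(F_n(x_1,…,x_n), x_{n+1}); (2) F_{n+1}(x_1,…,x_{n+1}) = P(F_n(x_1, (n−1)·F_n(x_2,…,x_{n+1})), F_n(x_2,…,x_{n+1})); and (3) P(F_n(F_n(x_2,…,x_{n+1}), x_2,…,x_n), x_{n+1}) = F_n(x_2,…,x_{n+1}). -/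
theorem bassoc_aux_s6 {X : Type*} {F : ∀ n : ℕ, (Fin n → X) → X} (hB : BAssoc F)
    (a b k N : ℕ) (hk : 1 ≤ k) (h : a + k + b = N) (u v : Fin N → X) (y : Fin k → X)
    (hy : ∀ i : Fin k, u ⟨a + i.1, by omega⟩ = y i)
    (hv : ∀ i : Fin k, v ⟨a + i.1, by omega⟩ = F k y)
    (hl : ∀ i : Fin N, i.1 < a → u i = v i)
    (hr : ∀ i : Fin N, a + k ≤ i.1 → u i = v i) : F N u = F N v := by
  subst h
  have key := hB a b k hk (fun i => u ⟨i.1, by omega⟩) y (fun i => u ⟨a + k + i.1, by omega⟩)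
  convert key using 2
  · funext i
    refine Fin.addCases (fun j => ?_) (fun j => ?_) i
    · refine Fin.addCases (fun l => ?_) (fun l => ?_) j
      · simp only [Fin.append_left]; rfl
      · simp only [Fin.append_left, Fin.append_right]; exact hy l
    · simp only [Fin.append_right]; rfl
  · funext i
    refine Fin.addCases (fun j => ?_) (fun j => ?_) i
    · refine Fin.addCases (fun l => ?_) (fun l => ?_) j
      · simp only [Fin.append_left]; exact (hl _ l.2).symm
      · simp only [Fin.append_left, Fin.append_right]; exact hv l
    · simp only [Fin.append_right]; exact (hr _ (Nat.le_add_right _ _)).symm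

theorem idem_aux {R : Type*} [Field R] [Infinite R] (q : Polynomial R)
    (hq : ∀ t, q.eval (q.eval t) = q.eval t) :
    (∃ c, ∀ t, q.eval t = c) ∨ ∀ t, q.eval t = t := by
  have hc : q.comp q = q := Polynomial.funext fun t => by
    rw [Polynomial.eval_comp, hq]
  have hd : q.natDegree * q.natDegree = q.natDegree := by
    rw [← Polynomial.natDegree_comp, hc]
  rcases Nat.eq_zero_or_pos q.natDegree with h0 | h0
  · left
    rw [Polynomial.eq_C_of_natDegree_eq_zero h0]
    exact ⟨q.coeff 0, fun t => by simp⟩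
  · right
    have h1 : q.natDegree = 1 := Nat.eq_of_mul_eq_mul_left h0 (by rw [hd, mul_one])
    obtain ⟨a, ha, b, hab⟩ := Polynomial.natDegree_eq_one.1 h1
    have he : ∀ t, q.eval t = a * t + b := fun t => by rw [← hab]; simp
    intro t
    have := hq t
    rw [he, he] at this
    have h2 : a * (a * t + b) = a * t := add_right_cancel this
    rw [he]
    exact mul_left_cancel₀ ha h2

/-- Lemma: let `F` be a B-associative `*`-ary polynomial function on an infinite field
`R` and suppose `F_{n+1}` is nonconstant for some `n ≥ 2` (here `n = m + 2`). Then there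
is an idempotent binary polynomial function `P : R² → R` such that, for all
`x_1, …, x_{n+1} ∈ R`:
(1) `F_{n+1}(x_1,…,x_{n+1}) = P(F_n(x_1,…,x_n), x_{n+1})`;
(2) `F_{n+1}(x_1,…,x_{n+1}) = P(F_n(x_1,(n-1)·F_n(x_2,…,x_{n+1})), F_n(x_2,…,x_{n+1}))`;
(3) `P(F_n(F_n(x_2,…,x_{n+1}), x_2,…,x_n), x_{n+1}) = F_n(x_2,…,x_{n+1})`. -/
theorem exists_idempotent_P
    {R : Type*} [Field R] [Infinite R]
    (F : ∀ n : ℕ, (Fin n → R) → R)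
    (hpoly : ∀ n : ℕ, 1 ≤ n →
      ∃ p : MvPolynomial (Fin n) R, ∀ x : Fin n → R, F n x = MvPolynomial.eval x p)
    (hB : BAssoc F) (m : ℕ)
    (hnc : ¬ ∃ c : R, ∀ x : Fin (m + 3) → R, F (m + 3) x = c) :
    ∃ P : R → R → R,
      (∃ p : MvPolynomial (Fin 2) R, ∀ a b : R, P a b = MvPolynomial.eval ![a, b] p) ∧
      (∀ a : R, P a a = a) ∧
      (∀ x : Fin (m + 3) → R,
        F (m + 3) x = P (F (m + 2) (x ∘ Fin.castSucc)) (x (Fin.last (m + 2)))) ∧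
      (∀ x : Fin (m + 3) → R,
        F (m + 3) x =
          P (F (m + 2)
              (Fin.cons (x 0) (fun _ : Fin (m + 1) => F (m + 2) (x ∘ Fin.succ))))
            (F (m + 2) (x ∘ Fin.succ))) ∧
      (∀ x : Fin (m + 3) → R,
        P (F (m + 2)
            (Fin.cons (F (m + 2) (x ∘ Fin.succ))
              (fun i : Fin (m + 1) => x i.succ.castSucc)))
          (x (Fin.last (m + 2))) = F (m + 2) (x ∘ Fin.succ)) := by
  obtain ⟨p, hp⟩ := hpoly (m + 3) (by omega)
  -- `F_{m+3}` is idempotent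
  have hid : ∀ t : R, F (m + 3) (fun _ => t) = t := by
    have hrep : ∀ x : Fin (m + 3) → R, F (m + 3) x = F (m + 3) (fun _ => F (m + 3) x) := fun x =>
      bassoc_aux_s6 hB 0 0 (m + 3) (m + 3) (by omega) (by omega) x _ x
        (fun i => by congr 1; ext; simp) (fun i => rfl) (fun i hi => by omega)
        (fun i hi => by omega)
    let q : Polynomial R := MvPolynomial.aeval (fun _ => Polynomial.X) p
    have hq : ∀ t, q.eval t = F (m + 3) (fun _ => t) := by
      intro t
      rw [hp]
      have := MvPolynomial.map_aeval (fun _ : Fin (m + 3) => (Polynomial.X : Polynomial R))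
        (Polynomial.evalRingHom t) p
      simp only [q]
      rw [← Polynomial.coe_evalRingHom, this, MvPolynomial.eval]
      congr 1
      simp
      congr 1
      ext; simp
    rcases idem_aux q (fun t => by simp only [hq]; exact (hrep _).symm) with ⟨c, hc⟩ | h
    · exact absurd ⟨c, fun x => by rw [hrep, ← hq, hc]⟩ hnc
    · intro t; rw [← hq, h]
  let P : R → R → R := fun a b => F (m + 3) (Fin.snoc (fun _ : Fin (m + 2) => a) b)
  have h1 : ∀ x : Fin (m + 3) → R,
      F (m + 3) x = P (F (m + 2) (x ∘ Fin.castSucc)) (x (Fin.last (m + 2))) := by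
    intro x
    refine bassoc_aux_s6 hB 0 1 (m + 2) (m + 3) (by omega) (by omega) x _ (x ∘ Fin.castSucc)
      (fun i => ?_) (fun i => ?_) (fun i hi => by omega) (fun i hi => ?_)
    · simp only [Function.comp]; congr 1; ext; simp
    · have : (⟨0 + i.1, by omega⟩ : Fin (m + 3)) = Fin.castSucc i := by ext; simp
      rw [this, Fin.snoc_castSucc]
    · have : i = Fin.last (m + 2) := by ext; simp; omega
      rw [this, Fin.snoc_last]
  have h2 : ∀ x : Fin (m + 3) → R,
      F (m + 3) x = F (m + 3) (Fin.cons (x 0) (fun _ : Fin (m + 2) => F (m + 2) (x ∘ Fin.succ))) := by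
    intro x
    refine bassoc_aux_s6 hB 1 0 (m + 2) (m + 3) (by omega) (by omega) x _ (x ∘ Fin.succ)
      (fun i => ?_) (fun i => ?_) (fun i hi => ?_) (fun i hi => by omega)
    · simp only [Function.comp]; congr 1; ext; simp [add_comm]
    · have : (⟨1 + i.1, by omega⟩ : Fin (m + 3)) = Fin.succ i := by ext; simp [add_comm]
      rw [this, Fin.cons_succ]
    · have : i = 0 := Fin.ext (by rw [Fin.val_zero]; omega)
      rw [this, Fin.cons_zero]
  refine ⟨P, ⟨MvPolynomial.aeval (Fin.snoc (fun _ : Fin (m + 2) => MvPolynomial.X 0)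
    (MvPolynomial.X 1) : Fin (m + 3) → MvPolynomial (Fin 2) R) p, fun a b => ?_⟩, ?_, h1, ?_, ?_⟩
  · simp only [P]
    rw [hp, MvPolynomial.map_aeval, MvPolynomial.eval]
    congr 1
    congr 1
    · ext; simp
    · funext i
      refine Fin.lastCases ?_ (fun j => ?_) i <;> simp
  · intro a
    refine Eq.trans ?_ (hid a)
    simp only [P]
    congr 1
    funext i
    refine Fin.lastCases ?_ (fun j => ?_) i <;> simp
  · intro x
    rw [h2, h1]
    congr 1
    congr 1
    funext i
    refine Fin.cases ?_ (fun j => ?_) i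
    · simp
    · simp only [Function.comp, Fin.castSucc_succ, Fin.cons_succ]
  · intro x
    set u := F (m + 2) (x ∘ Fin.succ) with hu
    have e1 := h1 (Fin.cons u (x ∘ Fin.succ))
    have e2 := h2 (Fin.cons u (x ∘ Fin.succ))
    have e3 : (Fin.cons u (x ∘ Fin.succ) : Fin (m + 3) → R) ∘ Fin.succ = x ∘ Fin.succ := by
      funext i; simp
    have e4 : (Fin.cons u (x ∘ Fin.succ) : Fin (m + 3) → R) ∘ Fin.castSucc =
        Fin.cons u (fun i : Fin (m + 1) => x i.succ.castSucc) := by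
      funext i
      refine Fin.cases ?_ (fun j => ?_) i
      · simp
      · simp only [Function.comp, Fin.castSucc_succ, Fin.cons_succ]
    have e5 : (Fin.cons u (x ∘ Fin.succ) : Fin (m + 3) → R) (Fin.last (m + 2)) =
        x (Fin.last (m + 2)) := by
      rw [← Fin.succ_last, Fin.cons_succ]; rfl
    rw [e4, e5] at e1
    rw [e3, ← hu, Fin.cons_zero] at e2
    rw [← e1, e2]
    refine Eq.trans ?_ (hid u)
    congr 1
    funext i
    refine Fin.cases ?_ (fun j => ?_) i <;> simp
end

section
/- Let F be a barycentrically associative *-ary polynomial function on an infinite field R. If F_3 is nonconstant, then F_2 is a polynomial function of degree 1. -/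
open Polynomial in
theorem aux_eval_aeval {R : Type*} [Field R] {σ : Type*} (v : σ → R[X]) (p : MvPolynomial σ R) (t : R) :
    Polynomial.eval t (MvPolynomial.aeval v p) =
      MvPolynomial.eval (fun k => Polynomial.eval t (v k)) p := by
  induction p using MvPolynomial.induction_on with
  | C a => simp
  | add p q hp hq => simp [hp, hq]
  | mul_X p n hp => simp [hp]

open Polynomial in
theorem aux_idem {R : Type*} [Field R] [Infinite R] (q : R[X])
    (h : ∀ t, q.eval (q.eval t) = q.eval t) :
    (∃ c, ∀ t, q.eval t = c) ∨ ∀ t, q.eval t = t := by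
  have h1 : (q - X).comp q = 0 := by
    apply Polynomial.funext
    intro t
    simp [h]
  rcases Polynomial.comp_eq_zero_iff.1 h1 with h2 | ⟨_, h2⟩
  · right
    intro t
    rw [sub_eq_zero.1 h2]; simp
  · left
    refine ⟨q.coeff 0, fun t => ?_⟩
    rw [h2]; simp

theorem aux_ext {i j : Fin 2} (hij : i ≠ j) {m m' : Fin 2 →₀ ℕ} (h1 : m i = m' i)
    (h2 : m j = m' j) : m = m' := by
  ext k
  have : k = i ∨ k = j := by omega
  rcases this with rfl | rfl <;> assumption

open Polynomial in
theorem aux_sum {R : Type*} [Field R] {i j : Fin 2} (hij : i ≠ j) (p : MvPolynomial (Fin 2) R)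
    (u v : R[X]) :
    MvPolynomial.aeval (fun k => if k = i then u else v) p =
      ∑ m ∈ p.support, C (p.coeff m) * (u ^ (m i) * v ^ (m j)) := by
  rw [MvPolynomial.aeval_def, MvPolynomial.eval₂_eq']
  refine Finset.sum_congr rfl fun m _ => ?_
  congr 1
  rw [Fin.prod_univ_two]
  have : (i = 0 ∧ j = 1) ∨ (i = 1 ∧ j = 0) := by omega
  rcases this with ⟨rfl, rfl⟩ | ⟨rfl, rfl⟩
  · simp
  · simp [mul_comm]

open Polynomial in
theorem aux_M {R : Type*} [Field R] [Infinite R] {i j : Fin 2} (hij : i ≠ j)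
    (p : MvPolynomial (Fin 2) R) (f : R → R → R) (g : R → R → R → R)
    (hf : ∀ x y, f x y = MvPolynomial.eval (fun k => if k = i then x else y) p)
    (hg1 : ∀ z, ∃ q : R[X], ∀ s, g s s z = q.eval s)
    (hg2 : ∀ s, ∃ q : R[X], ∀ z, g s s z = q.eval z)
    (hg3 : ∀ t, g t t t = t)
    (hgl : ∀ x y z, g x y z = g (f x y) (f x y) z)
    (hgr : ∀ x y z, g x y z = g x (f y z) (f y z))
    (hnc : ∃ s s' z, g s s z ≠ g s' s' z)
    (d : ℕ) (hd : 1 ≤ d) (hi : ∀ m ∈ p.support, m i ≤ d) (hj : ∀ m ∈ p.support, m j ≤ d)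
    (hat : ∃ m ∈ p.support, m i = d)
    (hc : (∃ m ∈ p.support, m i = d ∧ 0 < m j) ∨
      (∀ m ∈ p.support, ¬ (m i + 1 = d ∧ m j = d))) :
    d = 1 ∧ ∀ m ∈ p.support, m i = d → m j = 0 := by
  classical
  obtain ⟨M, hM, hMmax⟩ := Finset.exists_max_image (p.support.filter (fun m => m i = d))
    (fun m => m j) (by obtain ⟨m, h, h'⟩ := hat; exact ⟨m, Finset.mem_filter.2 ⟨h, h'⟩⟩)
  rw [Finset.mem_filter] at hM
  obtain ⟨hMs, hMi⟩ := hM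
  have hMc : p.coeff M ≠ 0 := by simpa using hMs
  have hMmax' : ∀ m ∈ p.support, m i = d → m j ≤ M j := fun m h h' =>
    hMmax m (Finset.mem_filter.2 ⟨h, h'⟩)
  set E : R[X] := ∑ m ∈ p.support.filter (fun m => m i = d), C (p.coeff m) * X ^ (m j) with hE
  have hE0 : E ≠ 0 := by
    intro h0
    have : E.coeff (M j) = p.coeff M := by
      rw [hE, Polynomial.finsetSum_coeff, Finset.sum_eq_single M]
      · simp
      · intro m hm hne
        rw [Finset.mem_filter] at hm
        rw [Polynomial.coeff_C_mul_X_pow, if_neg]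
        intro h
        exact hne (aux_ext hij (hm.2.trans hMi.symm) h.symm)
      · intro h
        exact absurd (Finset.mem_filter.2 ⟨hMs, hMi⟩) h
    rw [h0] at this
    exact hMc (by simpa using this.symm)
  obtain ⟨s, s', z1, hss⟩ := hnc
  obtain ⟨q, hq⟩ := hg2 s
  obtain ⟨q', hq'⟩ := hg2 s'
  have hqq : q - q' ≠ 0 := by
    intro h
    apply hss
    rw [hq, hq', sub_eq_zero.1 h]
  obtain ⟨z, hz⟩ : ∃ z, ((q - q') * E).eval z ≠ 0 := by
    by_contra! hcon
    exact mul_ne_zero hqq hE0 (Polynomial.funext (by simpa using hcon))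
  rw [Polynomial.eval_mul] at hz
  have hz1 : g s s z ≠ g s' s' z := by
    have := left_ne_zero_of_mul hz
    rw [Polynomial.eval_sub, sub_ne_zero] at this
    rwa [hq, hq']
  have hz2 : E.eval z ≠ 0 := right_ne_zero_of_mul hz
  set u : R[X] := MvPolynomial.aeval (fun k => if k = i then X else C z) p with hu
  have hue : ∀ y, u.eval y = f y z := by
    intro y
    rw [hu, aux_eval_aeval, hf]
    congr 1
    congr 1
    funext k
    split_ifs <;> simp
  have husum : u = ∑ m ∈ p.support, C (p.coeff m * z ^ (m j)) * X ^ (m i) := by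
    rw [hu, aux_sum hij]
    refine Finset.sum_congr rfl fun m _ => ?_
    simp only [map_mul, map_pow]; ring
  have hule : u.natDegree ≤ d := by
    rw [husum]
    apply Polynomial.natDegree_sum_le_of_forall_le
    intro m hm
    exact (Polynomial.natDegree_C_mul_X_pow_le _ _).trans (hi m hm)
  have hucoeff : u.coeff d = E.eval z := by
    rw [husum, Polynomial.finsetSum_coeff, hE, Polynomial.eval_finsetSum, Finset.sum_filter]
    refine Finset.sum_congr rfl fun m _ => ?_
    rw [Polynomial.coeff_C_mul_X_pow]
    by_cases h : m i = d
    · simp [h]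
    · rw [if_neg h, if_neg (Ne.symm h)]
  have hud : u.natDegree = d :=
    le_antisymm hule (Polynomial.le_natDegree_of_ne_zero (by rw [hucoeff]; exact hz2))
  have hu0 : u.coeff d ≠ 0 := by rw [hucoeff]; exact hz2
  set w : R[X] := MvPolynomial.aeval (fun k => if k = i then u else X) p with hw
  have hwe : ∀ y, w.eval y = f (f y z) y := by
    intro y
    rw [hw, aux_eval_aeval, hf (f y z)]
    congr 1
    congr 1
    funext k
    split_ifs <;> simp [hue]
  have hwsum : w = ∑ m ∈ p.support, C (p.coeff m) * (u ^ (m i) * X ^ (m j)) := by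
    rw [hw, aux_sum hij]
  have hwc : w.coeff (d * d + M j) ≠ 0 := by
    have : w.coeff (d * d + M j) = p.coeff M * (u.coeff d) ^ d := by
      rw [hwsum, Polynomial.finsetSum_coeff, Finset.sum_eq_single M]
      · rw [Polynomial.coeff_C_mul, Polynomial.coeff_mul_X_pow, hMi,
          Polynomial.coeff_pow_of_natDegree_le hule]
      · intro m hm hne
        rw [Polynomial.coeff_C_mul, Polynomial.coeff_eq_zero_of_natDegree_lt, mul_zero]
        have h1 : (u ^ (m i) * X ^ (m j)).natDegree ≤ m i * d + m j := by
          refine Polynomial.natDegree_mul_le.trans ?_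
          rw [Polynomial.natDegree_pow, Polynomial.natDegree_X_pow, hud]
        refine lt_of_le_of_lt h1 ?_
        have him := hi m hm
        have hjm := hj m hm
        rcases him.eq_or_lt with h | h
        · have hle := hMmax' m hm h
          have hne' : m j ≠ M j := fun h' => hne (aux_ext hij (h.trans hMi.symm) h')
          rw [h]
          omega
        · obtain ⟨e, rfl⟩ : ∃ e, d = e + 1 := ⟨d - 1, by omega⟩
          rcases (Nat.lt_succ_iff.1 h).eq_or_lt with h2 | h2
          · rw [h2]
            have : m j < e + 1 + M j := by
              rcases hc with ⟨m', hm', h3, h4⟩ | hc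
              · have := hMmax' m' hm' h3
                omega
              · have := hc m hm
                omega
            nlinarith
          · nlinarith
      · intro h; exact absurd hMs h
    rw [this]
    exact mul_ne_zero hMc (pow_ne_zero _ hu0)
  have hwd : d * d + M j ≤ w.natDegree := Polynomial.le_natDegree_of_ne_zero hwc
  obtain ⟨G, hG⟩ := hg1 z
  have hcomp : G.comp w = u := by
    apply Polynomial.funext
    intro y
    rw [Polynomial.eval_comp, hwe, hue, ← hG, ← hgl, hgr, hg3]
  have hGd : G.natDegree ≠ 0 := by
    intro h
    apply hz1
    rw [hG, hG, Polynomial.eq_C_of_natDegree_eq_zero h]; simp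
  have hdeg : G.natDegree * w.natDegree = d := by
    rw [← Polynomial.natDegree_comp, hcomp, hud]
  have hwle : w.natDegree ≤ d := by
    rw [← hdeg]; exact Nat.le_mul_of_pos_left _ (Nat.pos_of_ne_zero hGd)
  have hd1 : d = 1 := by nlinarith
  refine ⟨hd1, fun m hm h => ?_⟩
  have := hMmax' m hm h
  subst hd1
  omega

theorem aux_comb (S : Finset (Fin 2 →₀ ℕ)) (hS : S.Nonempty)
    (H : ∀ i j : Fin 2, i ≠ j → ∀ d, 1 ≤ d → (∀ m ∈ S, m i ≤ d) → (∀ m ∈ S, m j ≤ d) →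
      (∃ m ∈ S, m i = d) → ((∃ m ∈ S, m i = d ∧ 0 < m j) ∨
      (∀ m ∈ S, ¬ (m i + 1 = d ∧ m j = d))) → d = 1 ∧ ∀ m ∈ S, m i = d → m j = 0) :
    ∀ m ∈ S, m 0 + m 1 ≤ 1 := by
  obtain ⟨M, hM, hmax⟩ := Finset.exists_max_image S (fun m => max (m 0) (m 1)) hS
  obtain ⟨d, hd⟩ : ∃ d, d = max (M 0) (M 1) := ⟨_, rfl⟩
  have hle : ∀ (k : Fin 2), ∀ m ∈ S, m k ≤ d := by
    intro k m hm
    have := hmax m hm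
    have : k = 0 ∨ k = 1 := by omega
    rcases this with rfl | rfl <;> omega
  obtain ⟨i, j, hij, hi⟩ : ∃ i j : Fin 2, i ≠ j ∧ M i = d := by
    rcases le_total (M 0) (M 1) with h | h
    · exact ⟨1, 0, by simp, by omega⟩
    · exact ⟨0, 1, by simp, by omega⟩
  have hsum : ∀ m : Fin 2 →₀ ℕ, m 0 + m 1 = m i + m j := by
    intro m
    have : (i = 0 ∧ j = 1) ∨ (i = 1 ∧ j = 0) := by omega
    rcases this with ⟨rfl, rfl⟩ | ⟨rfl, rfl⟩
    · rfl
    · exact add_comm _ _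
  intro m hm
  rw [hsum]
  have hmi := hle i m hm
  have hmj := hle j m hm
  rcases Nat.eq_zero_or_pos d with h0 | h0
  · omega
  have H1 := H i j hij d h0 (hle i) (hle j) ⟨M, hM, hi⟩
  by_cases hc : ∀ m ∈ S, ¬ (m i + 1 = d ∧ m j = d)
  · obtain ⟨h1, h2⟩ := H1 (Or.inr hc)
    have := h2 m hm
    omega
  push Not at hc
  obtain ⟨m', hm', h1, h2⟩ := hc
  have H2 := H j i hij.symm d h0 (hle j) (hle i) ⟨m', hm', h2⟩
  by_cases hc : ∀ m ∈ S, ¬ (m j + 1 = d ∧ m i = d)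
  · obtain ⟨h1, h2⟩ := H2 (Or.inr hc)
    have := h2 m hm
    omega
  push Not at hc
  obtain ⟨m'', hm'', h3, h4⟩ := hc
  by_cases hd2 : d = 1
  · by_contra hcon
    have := (H1 (Or.inl ⟨m, hm, by omega, by omega⟩)).2 m hm
    omega
  · have := (H1 (Or.inl ⟨m'', hm'', h4, by omega⟩)).1
    omega

/-- Proposition: if `F` is a B-associative `*`-ary polynomial function on an infinite
field `R` and `F_3` is nonconstant, then `F_2` is a polynomial function of (total)
degree `1`. -/
theorem degree_F2_eq_one
    {R : Type*} [Field R] [Infinite R]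
    (F : ∀ n : ℕ, (Fin n → R) → R)
    (hpoly : ∀ n : ℕ, 1 ≤ n →
      ∃ p : MvPolynomial (Fin n) R, ∀ x : Fin n → R, F n x = MvPolynomial.eval x p)
    (hB : BAssoc F)
    (h3 : ¬ ∃ c : R, ∀ x : Fin 3 → R, F 3 x = c) :
    ∃ p : MvPolynomial (Fin 2) R,
      (∀ x : Fin 2 → R, F 2 x = MvPolynomial.eval x p) ∧ p.totalDegree = 1 := by
  obtain ⟨p, hp⟩ := hpoly 2 (by norm_num)
  obtain ⟨r, hr⟩ := hpoly 3 (by norm_num)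
  obtain ⟨f, hf⟩ : ∃ f : R → R → R, ∀ x y, f x y = F 2 ![x, y] := ⟨_, fun _ _ => rfl⟩
  obtain ⟨g, hg⟩ : ∃ g : R → R → R → R, ∀ x y z, g x y z = F 3 ![x, y, z] :=
    ⟨_, fun _ _ _ => rfl⟩
  have hf' : ∀ v, F 2 v = f (v 0) (v 1) := by
    intro v; rw [hf]; congr 1; funext k; fin_cases k <;> rfl
  have hg' : ∀ v, F 3 v = g (v 0) (v 1) (v 2) := by
    intro v; rw [hg]; congr 1; funext k; fin_cases k <;> rfl
  have hff : ∀ x y, f x y = f (f x y) (f x y) := by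
    intro x y
    have := hB 0 0 2 (by norm_num) ![] ![x, y] ![]
    simp only [Nat.add_zero, Nat.zero_add] at this
    change F 2 _ = F 2 _ at this
    rw [hf', hf', hf'] at this
    exact this
  have hggg : ∀ x y z, g x y z = g (g x y z) (g x y z) (g x y z) := by
    intro x y z
    have := hB 0 0 3 (by norm_num) ![] ![x, y, z] ![]
    change F 3 _ = F 3 _ at this
    rw [hg', hg', hg'] at this
    exact this
  have hgl : ∀ x y z, g x y z = g (f x y) (f x y) z := by
    intro x y z
    have := hB 0 1 2 (by norm_num) ![] ![x, y] ![z]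
    change F 3 _ = F 3 _ at this
    rw [hg', hg', hf'] at this
    exact this
  have hgr : ∀ x y z, g x y z = g x (f y z) (f y z) := by
    intro x y z
    have := hB 1 0 2 (by norm_num) ![x] ![y, z] ![]
    change F 3 _ = F 3 _ at this
    rw [hg', hg', hf'] at this
    exact this
  have hgp : ∀ a b c : Polynomial R, ∃ q : Polynomial R, ∀ t,
      g (a.eval t) (b.eval t) (c.eval t) = q.eval t := by
    intro a b c
    refine ⟨MvPolynomial.aeval ![a, b, c] r, fun t => ?_⟩
    rw [aux_eval_aeval, hg, hr]
    congr 2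
    funext k; fin_cases k <;> rfl
  have hfp : ∀ a b : Polynomial R, ∃ q : Polynomial R, ∀ t,
      f (a.eval t) (b.eval t) = q.eval t := by
    intro a b
    refine ⟨MvPolynomial.aeval ![a, b] p, fun t => ?_⟩
    rw [aux_eval_aeval, hf, hp]
    congr 2
    funext k; fin_cases k <;> rfl
  have hg3 : ∀ t, g t t t = t := by
    obtain ⟨q, hq⟩ := hgp Polynomial.X Polynomial.X Polynomial.X
    simp only [Polynomial.eval_X] at hq
    rcases aux_idem q (fun t => by rw [← hq t, ← hq, ← hggg]) with ⟨c, h⟩ | h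
    · exact absurd ⟨c, fun v => by rw [hg', hggg, hq, h]⟩ h3
    · intro t; rw [hq, h]
  have hf2 : ∀ t, f t t = t := by
    obtain ⟨q, hq⟩ := hfp Polynomial.X Polynomial.X
    simp only [Polynomial.eval_X] at hq
    rcases aux_idem q (fun t => by rw [← hq t, ← hq, ← hff]) with ⟨c, h⟩ | h
    · have hc : ∀ x y, f x y = c := fun x y => by rw [hff, hq, h]
      refine absurd ⟨g c c c, fun v => ?_⟩ h3
      rw [hg', hgl, hc, hgr, hc]
    · intro t; rw [hq, h]
  by_cases hL : ∃ s s' z, g s s z ≠ g s' s' z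
  swap
  · push Not at hL
    refine ⟨MvPolynomial.X 1, fun v => ?_, MvPolynomial.totalDegree_X _⟩
    have h1 : ∀ x y z, g x y z = z := fun x y z => by rw [hgl, hL _ z, hg3]
    have := hgr 0 (v 0) (v 1)
    rw [h1, h1] at this
    rw [hf', ← this]; simp
  by_cases hRr : ∃ s s' z, g z s s ≠ g z s' s'
  swap
  · push Not at hRr
    refine ⟨MvPolynomial.X 0, fun v => ?_, MvPolynomial.totalDegree_X _⟩
    have h1 : ∀ x y z, g x y z = x := fun x y z => by rw [hgr, hRr _ x, hg3]
    have := hgl (v 0) (v 1) 0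
    rw [h1, h1] at this
    rw [hf', ← this]; simp
  refine ⟨p, hp, le_antisymm ?_ ?_⟩
  · have hp0 : p.support.Nonempty := by
      rw [MvPolynomial.support_nonempty]
      rintro rfl
      have := hf2 1
      rw [hf, hp] at this
      simp at this
    have key := aux_comb p.support hp0 (by
      intro i j hij d hd h1 h2 h4 h5
      have : (i = 0 ∧ j = 1) ∨ (i = 1 ∧ j = 0) := by clear h1 h2 h4 h5; omega
      rcases this with ⟨rfl, rfl⟩ | ⟨rfl, rfl⟩
      · refine aux_M hij p f g ?_ ?_ ?_ hg3 hgl hgr hL d hd h1 h2 h4 h5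
        · intro x y
          rw [hf, hp]; congr 2; funext k; fin_cases k <;> rfl
        · intro z
          simpa using hgp Polynomial.X Polynomial.X (Polynomial.C z)
        · intro s
          simpa using hgp (Polynomial.C s) (Polynomial.C s) Polynomial.X
      · refine aux_M hij p (fun x y => f y x) (fun x y z => g z y x) ?_ ?_ ?_ hg3
          (fun x y z => hgr z y x) (fun x y z => hgl z y x) hRr d hd h1 h2 h4 h5
        · intro x y
          rw [hf, hp]; congr 2; funext k; fin_cases k <;> rfl
        · intro z
          simpa using hgp (Polynomial.C z) Polynomial.X Polynomial.X
        · intro s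
          simpa using hgp Polynomial.X (Polynomial.C s) (Polynomial.C s))
    rw [MvPolynomial.totalDegree]
    apply Finset.sup_le
    intro m hm
    have := key m hm
    rw [Finsupp.sum_fintype _ _ (by simp), Fin.sum_univ_two]
    exact this
  · by_contra hcon
    have h0 : p.totalDegree = 0 := by omega
    rw [MvPolynomial.totalDegree_eq_zero_iff_eq_C] at h0
    have e0 := hf2 0
    have e1 := hf2 1
    rw [hf, hp, h0, MvPolynomial.eval_C] at e0 e1
    exact zero_ne_one (e0.symm.trans e1)
end

section
/- Let R be an infinite commutative integral domain and let z ∈ R. The *-ary function M^z on R, whose n-ary part equals the weighted arithmetic mean M_n^z for every n < n(z) and equals the constant 0 function for every n ≥ n(z), is barycentrically associative. -/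
/-- The middle block of a concatenation factors out of the weighted sum. -/
theorem middle_block {R : Type*} [CommRing R] (a b k : ℕ) (z : R) (y : Fin k → R) :
    ∑ j : Fin k, z ^ (a + k + b - 1 - (a + (j : ℕ))) * (1 - z) ^ (a + (j : ℕ)) * y j =
      z ^ b * (1 - z) ^ a * ∑ j : Fin k, z ^ (k - 1 - (j : ℕ)) * (1 - z) ^ (j : ℕ) * y j := by
  rw [Finset.mul_sum]
  refine Finset.sum_congr rfl fun j _ => ?_
  have h : a + k + b - 1 - (a + (j : ℕ)) = b + (k - 1 - (j : ℕ)) := by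
    have := j.2
    omega
  rw [h, pow_add, pow_add]
  ring

/-- The `*`-ary function `M^z` — whose `n`-ary part is the weighted arithmetic mean
`M_n^z` for `n < n(z)` and the constant `0` function for `n ≥ n(z)` — is
barycentrically associative. -/
theorem Mz_bassoc
    {R : Type*} [CommRing R] [IsDomain R] [Infinite R] (z : R)
    (F : ∀ n : ℕ, (Fin n → R) → R)
    (hlt : ∀ n : ℕ, 1 ≤ n → (n : ℕ∞) < nz z → F n = Mz n z)
    (hge : ∀ n : ℕ, 1 ≤ n → nz z ≤ (n : ℕ∞) → ∀ x : Fin n → R, F n x = 0) :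
    BAssoc F := by
  intro a b k hk x y w
  have hn : 1 ≤ a + k + b := by omega
  rcases lt_or_ge ((a + k + b : ℕ) : ℕ∞) (nz z) with h | h
  · have hkn : (k : ℕ∞) < nz z := lt_of_le_of_lt (by exact_mod_cast (by omega : k ≤ a + k + b)) h
    have hu : IsUnit (Delta k z) := by
      by_contra hc
      exact absurd hkn (not_lt.mpr (sInf_le ⟨k, rfl, hk, hc⟩))
    rw [hlt _ hn h, hlt k hk hkn]
    unfold Mz
    congr 1
    simp only [Fin.sum_univ_add, Fin.append_left, Fin.append_right, Fin.val_castAdd,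
      Fin.val_natAdd, middle_block]
    congr 3
    rw [← Finset.sum_mul, Fin.sum_univ_eq_sum_range (fun i => z ^ (k - 1 - i) * (1 - z) ^ i) k,
      ← Delta, ← mul_assoc, Ring.mul_inverse_cancel _ hu, one_mul]
  · rw [hge _ hn h, hge _ hn h]
end

section
/- Let R be an infinite commutative integral domain and let Q : R² → R be a polynomial function. Define a *-ary function F on R by F_1(x) = x, F_2(x,y) = Q(x,y)·x + (1 − Q(x,y))·y, and F_n a constant function for every n ≥ 3 (all these constants being equal to some fixed c ∈ R). Then F is barycentrically associative. -/
/-- Over an infinite commutative integral domain `R`, given a binary polynomial function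
`Q`, the `*`-ary function `F` with `F_1(x) = x`, `F_2(x,y) = Q(x,y)·x + (1 - Q(x,y))·y`,
and `F_n` constant (equal to a fixed `c`) for every `n ≥ 3`, is barycentrically
associative. -/
theorem bassoc_of_binary_Q
    {R : Type*} [CommRing R] [IsDomain R] [Infinite R]
    (Q : R → R → R)
    (hQ : ∃ q : MvPolynomial (Fin 2) R, ∀ a b : R, Q a b = MvPolynomial.eval ![a, b] q)
    (c : R) (F : ∀ n : ℕ, (Fin n → R) → R)
    (h1 : ∀ x : Fin 1 → R, F 1 x = x 0)
    (h2 : ∀ x : Fin 2 → R, F 2 x = Q (x 0) (x 1) * x 0 + (1 - Q (x 0) (x 1)) * x 1)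
    (h3 : ∀ n : ℕ, 3 ≤ n → ∀ x : Fin n → R, F n x = c) :
    BAssoc F := by
  intro a b k hk x y z
  by_cases hn : 3 ≤ a + k + b
  · rw [h3 _ hn, h3 _ hn]
  · obtain rfl | ⟨rfl, rfl, rfl⟩ : k = 1 ∨ (k = 2 ∧ a = 0 ∧ b = 0) := by omega
    · have hy : (fun _ : Fin 1 => F 1 y) = y := by
        funext i
        rw [h1, Subsingleton.elim i 0]
      rw [hy]
    · have key : ∀ w : Fin 2 → R,
          Fin.append (Fin.append x w) z = fun i : Fin (0 + 2 + 0) => w (Fin.cast (by omega) i) := by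
        intro w
        have hx : x = Fin.elim0 := Subsingleton.elim _ _
        have hz : z = Fin.elim0 := Subsingleton.elim _ _
        subst hx hz
        rw [Fin.append_elim0, Fin.elim0_append]
        rfl
      rw [key, key]
      change F 2 y = F 2 (fun _ => F 2 y)
      rw [h2 (fun _ => F 2 y)]
      ring
end

section
/- Let R be an infinite commutative integral domain with fraction field K = Frac(R), and let F be a *-ary polynomial function on R, where F_n is given by a polynomial p_n ∈ R[x_1,…,x_n] for each n ≥ 1. Let F̄ be the *-ary polynomial function on K whose n-ary part is given by evaluating the same polynomial p_n over K. If F is barycentrically associative (on R), then F̄ is barycentrically associative (on K). -/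
/-- Maps commute with `Fin.append`. -/
theorem comp_append_aux {X Y : Type*} (f : X → Y) {m n : ℕ} (x : Fin m → X) (y : Fin n → X) :
    (fun i => f (Fin.append x y i)) = Fin.append (fun i => f (x i)) (fun i => f (y i)) := by
  funext i
  refine Fin.addCases (fun j => ?_) (fun j => ?_) i <;> simp

/-- Let `R` be an infinite commutative integral domain with fraction field `K`, and let
`F` be the `*`-ary polynomial function on `R` whose `n`-ary part is given by the
polynomial `p n ∈ R[x_1,…,x_n]`. If `F` is B-associative over `R`, then the `*`-ary
polynomial function on `K` obtained by evaluating the same polynomials over `K` is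
B-associative over `K`. -/
theorem bassoc_extend_to_fractionField
    {R : Type*} [CommRing R] [IsDomain R] [Infinite R]
    {K : Type*} [Field K] [Algebra R K] [IsFractionRing R K]
    (p : ∀ n : ℕ, MvPolynomial (Fin n) R)
    (hF : BAssoc (fun n (x : Fin n → R) => MvPolynomial.eval x (p n))) :
    BAssoc (fun n (x : Fin n → K) =>
      MvPolynomial.eval x (MvPolynomial.map (algebraMap R K) (p n))) := by
  intro a b k hk x y z
  let X : Fin a → MvPolynomial (Fin a ⊕ Fin k ⊕ Fin b) R := fun i => MvPolynomial.X (Sum.inl i)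
  let Y : Fin k → MvPolynomial (Fin a ⊕ Fin k ⊕ Fin b) R :=
    fun i => MvPolynomial.X (Sum.inr (Sum.inl i))
  let Z : Fin b → MvPolynomial (Fin a ⊕ Fin k ⊕ Fin b) R :=
    fun i => MvPolynomial.X (Sum.inr (Sum.inr i))
  -- the identity holds for the generic point, since `R` is an infinite domain
  have key : MvPolynomial.aeval (Fin.append (Fin.append X Y) Z) (p (a + k + b)) =
      MvPolynomial.aeval (Fin.append (Fin.append X (fun _ => MvPolynomial.aeval Y (p k))) Z)
        (p (a + k + b)) := by
    apply MvPolynomial.funext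
    intro v
    have h := hF a b k hk (fun i => v (Sum.inl i)) (fun i => v (Sum.inr (Sum.inl i)))
      (fun i => v (Sum.inr (Sum.inr i)))
    simp only [← MvPolynomial.coe_aeval_eq_eval, RingHom.coe_coe] at h ⊢
    simp only [MvPolynomial.comp_aeval_apply, comp_append_aux (MvPolynomial.aeval v)]
    simpa only [X, Y, Z, MvPolynomial.aeval_X] using h
  -- specialise the generic point to the given point over `K`
  let w : Fin a ⊕ Fin k ⊕ Fin b → K := Sum.elim x (Sum.elim y z)
  have h := congrArg (MvPolynomial.aeval w) key
  simp only [MvPolynomial.comp_aeval_apply, comp_append_aux (MvPolynomial.aeval w)] at h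
  simp only [X, Y, Z, w, MvPolynomial.aeval_X, Sum.elim_inl, Sum.elim_inr] at h
  simpa only [MvPolynomial.eval_map, MvPolynomial.aeval_def] using h
end

section
/- Let R be an infinite field and let P : R² → R and G : R² → R be idempotent binary polynomial functions satisfying P(G(x₁,x₂), x₃) = P(G(x₁, G(x₂,x₃)), G(x₂,x₃)) for all x₁, x₂, x₃ ∈ R. Write P(x,y) = Σ_{i=0}^p x^i P_i(y) and G(x,y) = Σ_{j=0}^q x^j Q_j(y), where P_i, Q_j : R → R are polynomial functions with P_p ≠ 0 and Q_q ≠ 0 (so p and q are the degrees of P and G in the first variable). If p > 0 and q > 0, then the polynomial functions P_p and Q_q are constant. -/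
open Polynomial in
theorem aux_coeff_sum {R : Type*} [Field R] (n : ℕ) (c : ℕ → R) :
    (∑ i ∈ Finset.range (n + 1), C (c i) * X ^ i : R[X]).coeff n = c n := by
  simp [Polynomial.coeff_C_mul, Polynomial.coeff_X_pow]

open Polynomial in
theorem aux_deg_sum {R : Type*} [Field R] (n : ℕ) (c : ℕ → R) :
    (∑ i ∈ Finset.range (n + 1), C (c i) * X ^ i : R[X]).natDegree ≤ n := by
  apply Polynomial.natDegree_sum_le_of_forall_le
  intro i hi
  have := Finset.mem_range.1 hi
  exact (Polynomial.natDegree_C_mul_X_pow_le _ _).trans (by omega)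

open Polynomial in
theorem aux_eval_sum {R : Type*} [Field R] (n : ℕ) (c : ℕ → R) (x : R) :
    (∑ i ∈ Finset.range (n + 1), C (c i) * X ^ i : R[X]).eval x
      = ∑ i ∈ Finset.range (n + 1), x ^ i * c i := by
  rw [Polynomial.eval_finsetSum]
  refine Finset.sum_congr rfl fun i _ => ?_
  rw [Polynomial.eval_C_mul, Polynomial.eval_pow, Polynomial.eval_X, mul_comm]

open Polynomial in
theorem aux_comp {R : Type*} [Field R] (p q : ℕ) (hq : 0 < q) (c : ℕ → R) (g : R[X])
    (hg : g.natDegree ≤ q) :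
    ((∑ i ∈ Finset.range (p + 1), C (c i) * X ^ i : R[X]).comp g).coeff (p * q)
      = c p * g.coeff q ^ p := by
  rw [Finset.sum_range_succ, Polynomial.add_comp, Polynomial.coeff_add]
  have h1 : ((∑ i ∈ Finset.range p, C (c i) * X ^ i : R[X]).comp g).coeff (p * q) = 0 := by
    rw [Polynomial.sum_comp, Polynomial.finsetSum_coeff]
    apply Finset.sum_eq_zero
    intro i hi
    have hi := Finset.mem_range.1 hi
    simp only [Polynomial.mul_comp, Polynomial.C_comp, Polynomial.X_pow_comp,
      Polynomial.coeff_C_mul]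
    rw [Polynomial.coeff_eq_zero_of_natDegree_lt, mul_zero]
    calc (g ^ i).natDegree ≤ i * q := Polynomial.natDegree_pow_le_of_le i hg
      _ < p * q := Nat.mul_lt_mul_of_pos_right hi hq
  rw [h1]
  simp [Polynomial.coeff_pow_of_natDegree_le hg]

/-- Claim (inside Proposition 3): let `R` be an infinite field and let `P, G : R² → R` be
idempotent binary polynomial functions satisfying
`P(G(x₁,x₂), x₃) = P(G(x₁,G(x₂,x₃)), G(x₂,x₃))`. Write `P(x,y) = Σ_{i=0}^p x^i Pᵢ(y)`
and `G(x,y) = Σ_{j=0}^q x^j Qⱼ(y)` with polynomial functions `Pᵢ, Qⱼ : R → R`,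
`P_p ≠ 0` and `Q_q ≠ 0`. If `p > 0` and `q > 0`, then `P_p` and `Q_q` are constant. -/
theorem leading_coefficients_constant
    {R : Type*} [Field R] [Infinite R]
    (p q : ℕ) (hp : 0 < p) (hq : 0 < q)
    (P G : R → R → R) (Pc Qc : ℕ → R → R)
    (hPc : ∀ i : ℕ, ∃ f : Polynomial R, ∀ y : R, Pc i y = f.eval y)
    (hQc : ∀ j : ℕ, ∃ f : Polynomial R, ∀ y : R, Qc j y = f.eval y)
    (hPdef : ∀ x y : R, P x y = ∑ i ∈ Finset.range (p + 1), x ^ i * Pc i y)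
    (hGdef : ∀ x y : R, G x y = ∑ j ∈ Finset.range (q + 1), x ^ j * Qc j y)
    (hPp : ∃ y : R, Pc p y ≠ 0) (hQq : ∃ y : R, Qc q y ≠ 0)
    (hPidem : ∀ x : R, P x x = x) (hGidem : ∀ x : R, G x x = x)
    (heq : ∀ x₁ x₂ x₃ : R, P (G x₁ x₂) x₃ = P (G x₁ (G x₂ x₃)) (G x₂ x₃)) :
    (∃ c : R, ∀ y : R, Pc p y = c) ∧ (∃ c : R, ∀ y : R, Qc q y = c) := by
  classical
  choose f hf using hPc
  choose g hg using hQc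
  -- comparison of leading coefficients in the first variable
  have key : ∀ x₂ x₃ : R, (f p).eval x₃ * (g q).eval x₂ ^ p
      = (f p).eval (G x₂ x₃) * (g q).eval (G x₂ x₃) ^ p := by
    intro x₂ x₃
    have h : (∑ i ∈ Finset.range (p + 1),
          Polynomial.C ((f i).eval x₃) * Polynomial.X ^ i : Polynomial R).comp
          (∑ j ∈ Finset.range (q + 1), Polynomial.C ((g j).eval x₂) * Polynomial.X ^ j)
        = (∑ i ∈ Finset.range (p + 1),
          Polynomial.C ((f i).eval (G x₂ x₃)) * Polynomial.X ^ i : Polynomial R).comp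
          (∑ j ∈ Finset.range (q + 1),
            Polynomial.C ((g j).eval (G x₂ x₃)) * Polynomial.X ^ j) := by
      apply Polynomial.funext
      intro x₁
      have h := heq x₁ x₂ x₃
      rw [hPdef, hPdef _ (G x₂ x₃), hGdef x₁ x₂, hGdef x₁ (G x₂ x₃)] at h
      simp only [hf, hg] at h
      rw [Polynomial.eval_comp, Polynomial.eval_comp]
      simp only [aux_eval_sum]
      exact h
    have h2 := congrArg (fun r => r.coeff (p * q)) h
    rw [aux_comp p q hq _ _ (aux_deg_sum q _), aux_comp p q hq _ _ (aux_deg_sum q _),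
      aux_coeff_sum q (fun j => (g j).eval x₂),
      aux_coeff_sum q (fun j => (g j).eval (G x₂ x₃))] at h2
    exact h2
  have hA : f p ≠ 0 := by
    rintro h
    obtain ⟨y, hy⟩ := hPp
    exact hy (by rw [hf, h]; simp)
  have hB : g q ≠ 0 := by
    rintro h
    obtain ⟨y, hy⟩ := hQq
    exact hy (by rw [hg, h]; simp)
  obtain ⟨y, hy⟩ : ∃ y, (f p * g q).eval y ≠ 0 := by
    by_contra hcon
    push Not at hcon
    exact mul_ne_zero hA hB (Polynomial.funext (fun r => by simpa using hcon r))
  rw [Polynomial.eval_mul] at hy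
  have hAy := left_ne_zero_of_mul hy
  have hBy := right_ne_zero_of_mul hy
  have hH : (f p * g q ^ p).natDegree = (f p).natDegree + p * (g q).natDegree := by
    rw [Polynomial.natDegree_mul hA (pow_ne_zero _ hB), Polynomial.natDegree_pow]
  -- degree in the second variable
  have d1 : p * (g q).natDegree = ((f p).natDegree + p * (g q).natDegree) * q := by
    have h : Polynomial.C ((f p).eval y) * g q ^ p = (f p * g q ^ p).comp
        (∑ j ∈ Finset.range (q + 1), Polynomial.C ((g j).eval y) * Polynomial.X ^ j) := by
      apply Polynomial.funext
      intro x
      have h := key x y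
      rw [hGdef x y] at h
      simp only [hg] at h
      simp only [Polynomial.eval_comp, aux_eval_sum, Polynomial.eval_mul, Polynomial.eval_pow,
        Polynomial.eval_C]
      exact h
    have hd : (∑ j ∈ Finset.range (q + 1),
        Polynomial.C ((g j).eval y) * Polynomial.X ^ j : Polynomial R).natDegree = q := by
      apply le_antisymm (aux_deg_sum q _)
      apply Polynomial.le_natDegree_of_ne_zero
      rw [aux_coeff_sum q (fun j => (g j).eval y)]
      exact hBy
    have h2 := congrArg Polynomial.natDegree h
    rwa [Polynomial.natDegree_comp, hd, hH, Polynomial.natDegree_C_mul hAy,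
      Polynomial.natDegree_pow] at h2
  have ha : (f p).natDegree = 0 := by nlinarith
  have hb : (g q).natDegree = 0 := by
    by_contra hb
    have hb' : 0 < (g q).natDegree := Nat.pos_of_ne_zero hb
    have hpb : 0 < p * (g q).natDegree := Nat.mul_pos hp hb'
    have hq1 : q = 1 := by
      rw [ha, zero_add] at d1
      exact Nat.eq_of_mul_eq_mul_left hpb (by rw [← d1, mul_one])
    subst hq1
    have hQ0 : g 0 = Polynomial.X * (1 - g 1) := by
      apply Polynomial.funext
      intro x
      have h := hGidem x
      rw [hGdef] at h
      simp [Finset.sum_range_succ, hg] at h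
      simp only [Polynomial.eval_mul, Polynomial.eval_X, Polynomial.eval_sub, Polynomial.eval_one]
      linear_combination h
    have h : f p * Polynomial.C ((g 1).eval 0 ^ p) = (f p * g 1 ^ p).comp (g 0) := by
      apply Polynomial.funext
      intro x
      have h := key 0 x
      have hG0 : G 0 x = (g 0).eval x := by
        rw [hGdef]
        simp [Finset.sum_range_succ, hg]
      rw [hG0] at h
      simpa [Polynomial.eval_comp] using h
    have h2 := congrArg Polynomial.natDegree h
    rw [Polynomial.natDegree_comp, hH] at h2
    have h3 : (f p * Polynomial.C ((g 1).eval 0 ^ p)).natDegree ≤ 0 :=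
      (Polynomial.natDegree_mul_C_le _ _).trans ha.le
    have h4 : (g 0).natDegree = 0 := by
      have h5 : ((f p).natDegree + p * (g 1).natDegree) * (g 0).natDegree = 0 := by omega
      rcases Nat.mul_eq_zero.1 h5 with h6 | h6
      · omega
      · exact h6
    have hne : (1 - g 1 : Polynomial R) ≠ 0 := by
      intro h0
      rw [← sub_eq_zero.1 h0] at hb
      simp at hb
    rw [hQ0, Polynomial.natDegree_X_mul hne] at h4
    omega
  refine ⟨⟨(f p).coeff 0, fun y => ?_⟩, ⟨(g q).coeff 0, fun y => ?_⟩⟩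
  · rw [hf, Polynomial.eq_C_of_natDegree_eq_zero ha]; simp
  · rw [hg, Polynomial.eq_C_of_natDegree_eq_zero hb]; simp
end
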